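/- arXiv:2206.03323 — 3 statements merged into one kernel-verified Lean document; each statement's English description precedes it below -/
import Mathlib

section
/- Let V = {S_1, ..., S_n} be a simple m-dimensional Venn diagram and let r be an integer with 1 < r < n such that every subset of V of size r is a Venn diagram. Then every subset of V of size r - 1 is also a Venn diagram. -/
open Set Metric Bornology

section VennDefs

variable {E : Type*} [TopologicalSpace E]

/-- `A ⊆ E` is homeomorphic to the `d`-dimensional sphere `S^d ⊆ ℝ^{d+1}`. -/
def HomeoToSphere (d : ℕ) (A : Set E) : Prop :=
  Nonempty (A ≃ₜ (Metric.sphere (0 : EuclideanSpace ℝ (Fin (d + 1))) 1 :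
    Set (EuclideanSpace ℝ (Fin (d + 1)))))

/-- `A` is a union of finitely many compact sets, each homeomorphic to `S^d`. -/
def FinUnionOfSpheres (d : ℕ) (A : Set E) : Prop :=
  ∃ 𝒞 : Finset (Set E), A = ⋃₀ ↑𝒞 ∧ ∀ C ∈ 𝒞, IsCompact C ∧ HomeoToSphere d C

/-- `A` is a disjoint union of finitely many compact sets, each homeomorphic to `S^d`. -/
def FinDisjUnionOfSpheres (d : ℕ) (A : Set E) : Prop :=
  ∃ 𝒞 : Finset (Set E), A = ⋃₀ ↑𝒞 ∧ (↑𝒞 : Set (Set E)).PairwiseDisjoint id ∧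
    ∀ C ∈ 𝒞, IsCompact C ∧ HomeoToSphere d C

end VennDefs

section MetricVennDefs

variable {E : Type*} [MetricSpace E]

/-- An `m`-surface: a compact set homeomorphic to the sphere `S^{m-1}`. -/
def IsMSurface (m : ℕ) (S : Set E) : Prop :=
  IsCompact S ∧ HomeoToSphere (m - 1) S

/-- The two sides of an `m`-surface: side `0` (the "interior") consists of the points of the
complement whose connected component in the complement is bounded, and side `1`
(the "exterior") of those whose component is unbounded. -/
def surfSide (S : Set E) : Fin 2 → Set E := fun ε =>
  if ε = 0 then {x | x ∉ S ∧ IsBounded (connectedComponentIn Sᶜ x)}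
  else {x | x ∉ S ∧ ¬ IsBounded (connectedComponentIn Sᶜ x)}

/-- A family of `m`-surfaces is an `m`-dimensional Venn diagram if every region
`S₁^{ε₁} ∩ ⋯ ∩ Sₙ^{εₙ}` is nonempty and connected, and the intersection of any two of the
surfaces is a disjoint union of finitely many `(m-1)`-surfaces, i.e. sets homeomorphic
to `S^{m-2}`. -/
def IsVennDiagram (m : ℕ) {ι : Type*} [Fintype ι] (S : ι → Set E) : Prop :=
  (∀ i, IsMSurface m (S i)) ∧
  (∀ ε : ι → Fin 2, (⋂ i, surfSide (S i) (ε i)).Nonempty ∧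
    IsConnected (⋂ i, surfSide (S i) (ε i))) ∧
  (∀ i j, i ≠ j → FinDisjUnionOfSpheres (m - 2) (S i ∩ S j))

/-- A Venn diagram is simple if for every `k ≥ 2`, the intersection of any `k` distinct
surfaces is a union of finitely many sets homeomorphic to `S^{m-k}` (and is empty
when `m - k ≤ 0`). -/
def IsSimpleVennDiagram (m : ℕ) {ι : Type*} [Fintype ι] (S : ι → Set E) : Prop :=
  IsVennDiagram m S ∧
  ∀ t : Finset ι, 2 ≤ t.card →
    if m ≤ t.card then (⋂ i ∈ t, S i) = ∅
    else FinUnionOfSpheres (m - t.card) (⋂ i ∈ t, S i)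

/-- A Venn diagram is fully reducible if every subfamily is again a Venn diagram. -/
def FullyReducible (m : ℕ) {ι : Type*} [Fintype ι] (S : ι → Set E) : Prop :=
  ∀ t : Finset ι, IsVennDiagram m (fun i : {x // x ∈ t} => S i.1)

/-- The number of regions of a family of surfaces: the number of connected components of
the nonempty cells `⋂ i, (S i)^{ε i}`. -/
noncomputable def vennRegionCount {ι : Type*} [Fintype ι] (S : ι → Set E) : ℕ :=
  Nat.card {A : Set E // ∃ (ε : ι → Fin 2) (x : E),
    x ∈ ⋂ i, surfSide (S i) (ε i) ∧ A = connectedComponentIn (⋂ i, surfSide (S i) (ε i)) x}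

/-- The edges of the diagram lying on the surface `S i`: connected components of
`S i \ ⋃_{j ≠ i} S j`. -/
def vennEdgeSet {ι : Type*} [Fintype ι] (S : ι → Set E) (i : ι) : Set (Set E) :=
  {A | ∃ x ∈ S i \ ⋃ j ∈ {j | j ≠ i}, S j,
    A = connectedComponentIn (S i \ ⋃ j ∈ {j | j ≠ i}, S j) x}

/-- The number of edges lying on the surface `S i`. -/
noncomputable def vennEdgeCountOn {ι : Type*} [Fintype ι] (S : ι → Set E) (i : ι) : ℕ :=
  Nat.card (vennEdgeSet S i)

/-- The total number of edges of the diagram. -/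
noncomputable def vennEdgeCount {ι : Type*} [Fintype ι] (S : ι → Set E) : ℕ :=
  ∑ i, vennEdgeCountOn S i

end MetricVennDefs


section Topo
open MeasureTheory

lemma det_interp {k : ℕ} (A : EuclideanSpace ℝ (Fin k) →L[ℝ] EuclideanSpace ℝ (Fin k))
    (v : ℕ → ℝ) (hv : Set.InjOn v (Finset.range (k+1))) :
    (1 + A).det = ∑ i ∈ Finset.range (k+1),
      (Lagrange.basis (Finset.range (k+1)) v i).eval 1 * (1 + v i • A).det := by
  classical
  set b := (EuclideanSpace.basisFun (Fin k) ℝ).toBasis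
  set M := LinearMap.toMatrix b b (A : EuclideanSpace ℝ (Fin k) →ₗ[ℝ] EuclideanSpace ℝ (Fin k))
    with hM
  set p : Polynomial ℝ := ((Polynomial.X : Polynomial ℝ) • M.map Polynomial.C +
    (1 : Matrix (Fin k) (Fin k) ℝ).map Polynomial.C).det with hp
  have hdeg : p.degree < ((Finset.range (k+1)).card : WithBot ℕ) := by
    have h := Polynomial.natDegree_det_X_add_C_le M 1
    rw [Fintype.card_fin] at h
    refine lt_of_le_of_lt (Polynomial.degree_le_of_natDegree_le h) ?_
    simp only [Finset.card_range]
    exact_mod_cast Nat.lt_succ_self k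
  have heval : ∀ t : ℝ, p.eval t = (1 + t • A).det := by
    intro t
    have h1 : (1 + t • A).det = (1 + t • M).det := by
      change LinearMap.det ((1 + t • A : EuclideanSpace ℝ (Fin k) →L[ℝ] EuclideanSpace ℝ (Fin k)) :
        EuclideanSpace ℝ (Fin k) →ₗ[ℝ] EuclideanSpace ℝ (Fin k)) = _
      rw [← LinearMap.det_toMatrix b]
      congr 1
      have : ((1 + t • A : EuclideanSpace ℝ (Fin k) →L[ℝ] EuclideanSpace ℝ (Fin k)) :
        EuclideanSpace ℝ (Fin k) →ₗ[ℝ] EuclideanSpace ℝ (Fin k)) = LinearMap.id + t • (A :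
        EuclideanSpace ℝ (Fin k) →ₗ[ℝ] EuclideanSpace ℝ (Fin k)) := by
        ext; simp
      rw [this, map_add, map_smul, LinearMap.toMatrix_id]
    rw [h1, hp, ← Polynomial.coe_evalRingHom, RingHom.map_det]
    congr 1
    ext i j
    by_cases hij : i = j
    · simp [hij, add_comm]; ring
    · simp [hij]; ring
  have h := congrArg (Polynomial.eval 1) (Lagrange.eq_interpolate hv hdeg)
  rw [Lagrange.interpolate_apply, Polynomial.eval_finsetSum, heval 1, one_smul] at h
  rw [h]
  refine Finset.sum_congr rfl fun i _ => ?_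
  rw [Polynomial.eval_mul, Polynomial.eval_C, heval, mul_comm]

/-- Extension by zero of a Lipschitz function vanishing on the unit sphere. -/
lemma lip_ext {E : Type*} [NormedAddCommGroup E] [NormedSpace ℝ E] (u : E → E) (K : ℝ)
    (hK : 0 ≤ K)
    (hu : ∀ x ∈ closedBall (0:E) 1, ∀ y ∈ closedBall (0:E) 1, ‖u x - u y‖ ≤ K * ‖x - y‖)
    (h0 : ∀ x, ‖x‖ = 1 → u x = 0) (x y : E) :
    ‖(closedBall (0:E) 1).indicator u x - (closedBall (0:E) 1).indicator u y‖
      ≤ K * ‖x - y‖ := by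
  have key : ∀ x y : E, x ∈ closedBall (0:E) 1 → y ∉ closedBall (0:E) 1 →
      ‖u x‖ ≤ K * ‖x - y‖ := by
    intro x y hx hy
    have hc : ContinuousOn (fun s : ℝ => ‖x + s • (y - x)‖) (Icc 0 1) := by fun_prop
    have hx' : ‖x‖ ≤ 1 := by simpa using hx
    have hy' : 1 < ‖y‖ := by simpa using hy
    obtain ⟨s, hs, hs1⟩ := intermediate_value_Icc (zero_le_one) hc
      (show (1:ℝ) ∈ Icc _ _ by constructor <;> simp [hx', hy'.le])
    have hz : x + s • (y - x) ∈ closedBall (0:E) 1 := by simpa using hs1.le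
    have := hu x hx _ hz
    rw [h0 _ hs1, sub_zero] at this
    refine this.trans (mul_le_mul_of_nonneg_left ?_ hK)
    have e : x - (x + s • (y - x)) = s • (x - y) := by
      rw [← neg_sub x y, smul_neg]; abel
    rw [e, norm_smul, Real.norm_of_nonneg hs.1]
    exact mul_le_of_le_one_left (norm_nonneg _) hs.2
  by_cases hx : x ∈ closedBall (0:E) 1 <;> by_cases hy : y ∈ closedBall (0:E) 1
  · rw [indicator_of_mem hx, indicator_of_mem hy]; exact hu x hx y hy
  · rw [indicator_of_mem hx, indicator_of_notMem hy, sub_zero]; exact key x y hx hy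
  · rw [indicator_of_notMem hx, indicator_of_mem hy, zero_sub, norm_neg, norm_sub_rev]
    exact key y x hy hx
  · rw [indicator_of_notMem hx, indicator_of_notMem hy, sub_zero, norm_zero]; positivity

/-- Euclidean space of dimension `k+1`. -/
abbrev ESp (k : ℕ) := EuclideanSpace ℝ (Fin (k+1))

lemma no_retraction {k : ℕ} (G : ESp k → ESp k)
    (hG : ContDiff ℝ 1 G) (h1 : ∀ x, ‖G x‖ = 1) (hid : ∀ x, ‖x‖ = 1 → G x = x) : False := by
  set u : ESp k → ESp k := fun x => G x - x with hu
  have hudiff : ContDiff ℝ 1 u := hG.sub contDiff_id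
  have hu' : Continuous (fderiv ℝ u) := hudiff.continuous_fderiv one_ne_zero
  have hGd : Differentiable ℝ G := hG.differentiable one_ne_zero
  have hud : Differentiable ℝ u := hudiff.differentiable one_ne_zero
  obtain ⟨K, hK⟩ := (isCompact_closedBall (0:ESp k) 1).exists_bound_of_continuousOn hu'.continuousOn
  have hK0 : 0 ≤ K := (norm_nonneg _).trans (hK 0 (by simp))
  have hlip : ∀ x ∈ closedBall (0:ESp k) 1, ∀ y ∈ closedBall (0:ESp k) 1,
      ‖u x - u y‖ ≤ K * ‖x - y‖ := fun x hx y hy =>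
    Convex.norm_image_sub_le_of_norm_fderiv_le (fun z _ => hud z) hK (convex_closedBall 0 1) hy hx
  set w := (closedBall (0:ESp k) 1).indicator u with hw
  have hwlip : ∀ x y, ‖w x - w y‖ ≤ K * ‖x - y‖ :=
    lip_ext u K hK0 hlip (fun x hx => by simp [hu, hid x hx])
  have hw0 : ∀ x, 1 ≤ ‖x‖ → w x = 0 := by
    intro x hx
    by_cases hx' : x ∈ closedBall (0:ESp k) 1
    · rw [hw, indicator_of_mem hx']
      have : ‖x‖ = 1 := le_antisymm (by simpa using hx') hx
      simp [hu, hid x this]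
    · rw [hw, indicator_of_notMem hx']
  obtain ⟨ε, hε, hdet⟩ : ∃ ε > 0, ∀ A : ESp k →L[ℝ] ESp k, ‖A‖ < ε → 0 < (1 + A).det := by
    have hc : Continuous fun A : ESp k →L[ℝ] ESp k => (1 + A).det :=
      ContinuousLinearMap.continuous_det.comp (continuous_const.add continuous_id)
    have : {A : ESp k →L[ℝ] ESp k | 0 < (1 + A).det} ∈ nhds (0 : ESp k →L[ℝ] ESp k) := by
      refine (isOpen_lt continuous_const hc).mem_nhds ?_
      simp [ContinuousLinearMap.det]
    obtain ⟨ε, hε, h⟩ := Metric.mem_nhds_iff.1 this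
    exact ⟨ε, hε, fun A hA => h (by simpa using hA)⟩
  obtain ⟨δ, hδ, hδK, hδε⟩ : ∃ δ > 0, δ * K ≤ 1/2 ∧ δ * K < ε := by
    refine ⟨min (1/2) (ε/2) / (K+1), by positivity, ?_, ?_⟩
    · rw [div_mul_eq_mul_div, div_le_iff₀ (by positivity)]
      nlinarith [min_le_left (1/2) (ε/2), min_le_right (1/2) (ε/2)]
    · rw [div_mul_eq_mul_div, div_lt_iff₀ (by positivity)]
      nlinarith [min_le_left (1/2) (ε/2), min_le_right (1/2) (ε/2)]
  have hvol : ∀ t : ℝ, 0 ≤ t → t ≤ δ →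
      ∫ x in ball (0:ESp k) 1, (1 + t • fderiv ℝ u x).det = (volume (ball (0:ESp k) 1)).toReal := by
    intro t ht0 htδ
    have htK : t * K ≤ 1/2 := (mul_le_mul_of_nonneg_right htδ hK0).trans hδK
    have htε : t * K < ε := (mul_le_mul_of_nonneg_right htδ hK0).trans_lt hδε
    set f : ESp k → ESp k := fun x => x + t • w x with hf
    have happ : ∀ x y, ‖f x - f y - (x - y)‖ ≤ 1/2 * ‖x - y‖ := by
      intro x y
      have e : f x - f y - (x - y) = t • (w x - w y) := by
        simp only [hf, smul_sub]; abel
      rw [e, norm_smul, Real.norm_of_nonneg ht0]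
      calc t * ‖w x - w y‖ ≤ t * (K * ‖x - y‖) := mul_le_mul_of_nonneg_left (hwlip x y) ht0
        _ = (t * K) * ‖x - y‖ := by ring
        _ ≤ _ := mul_le_mul_of_nonneg_right htK (norm_nonneg _)
    have hinj : Function.Injective f := by
      intro x y hxy
      have := happ x y
      rw [hxy, sub_self, zero_sub, norm_neg] at this
      have h2 : ‖x - y‖ = 0 := by linarith [norm_nonneg (x - y)]
      exact sub_eq_zero.1 (norm_eq_zero.1 h2)
    have hsurj : Function.Surjective f := by
      have ha : ApproximatesLinearOn f ((ContinuousLinearEquiv.refl ℝ (ESp k) : ESp k ≃L[ℝ] ESp k) : ESp k →L[ℝ] ESp k)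
          univ (1/2 : NNReal) := by
        intro x _ y _
        simpa using happ x y
      refine ha.surjective (Or.inr ?_)
      have : ‖(((ContinuousLinearEquiv.refl ℝ (ESp k)).symm : ESp k ≃L[ℝ] ESp k) : ESp k →L[ℝ] ESp k)‖₊ = 1 := by
        have : ‖(ContinuousLinearMap.id ℝ (ESp k))‖ = 1 := ContinuousLinearMap.norm_id
        exact NNReal.eq this
      rw [this, inv_one]
      exact NNReal.coe_lt_coe.1 (by norm_num)
    have hfout : ∀ x, 1 ≤ ‖x‖ → f x = x := by
      intro x hx; simp [hf, hw0 x hx]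
    have himg : f '' ball (0:ESp k) 1 = ball (0:ESp k) 1 := by
      ext y
      simp only [mem_image, mem_ball_zero_iff]
      constructor
      · rintro ⟨x, hx, rfl⟩
        by_contra hcon
        push Not at hcon
        have := hinj (hfout (f x) hcon)
        rw [this] at hcon
        exact absurd hx (not_lt.2 hcon)
      · intro hy
        obtain ⟨x, rfl⟩ := hsurj y
        refine ⟨x, ?_, rfl⟩
        by_contra hcon
        push Not at hcon
        rw [hfout x hcon] at hy
        exact absurd hy (not_lt.2 hcon)
    have hderiv : ∀ x ∈ ball (0:ESp k) 1,
        HasFDerivWithinAt f (1 + t • fderiv ℝ u x) (ball (0:ESp k) 1) x := by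
      intro x hx
      have h : HasFDerivAt (fun x => x + t • u x) (1 + t • fderiv ℝ u x) x :=
        (hasFDerivAt_id x).add ((hud x).hasFDerivAt.const_smul t)
      refine h.hasFDerivWithinAt.congr (fun y hy => ?_) ?_
      · simp only [hf, hw, indicator_of_mem (ball_subset_closedBall hy)]
      · simp only [hf, hw, indicator_of_mem (ball_subset_closedBall hx)]
    have hcv := integral_image_eq_integral_abs_det_fderiv_smul volume measurableSet_ball hderiv
      hinj.injOn (fun _ => (1:ℝ))
    rw [himg] at hcv
    simp only [smul_eq_mul, mul_one, integral_const, Measure.real, Measure.restrict_apply_univ] at hcv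
    rw [hcv]
    refine setIntegral_congr_fun measurableSet_ball fun x hx => ?_
    have : ‖t • fderiv ℝ u x‖ < ε := by
      rw [norm_smul, Real.norm_of_nonneg ht0]
      exact (mul_le_mul_of_nonneg_left (hK x (ball_subset_closedBall hx)) ht0).trans_lt htε
    exact (abs_of_pos (hdet _ this)).symm
  have hdet0 : ∀ x, (1 + fderiv ℝ u x).det = 0 := by
    intro x
    have e : 1 + fderiv ℝ u x = fderiv ℝ G x := by
      have : fderiv ℝ u x = fderiv ℝ G x - fderiv ℝ (fun y => y) x :=
        fderiv_sub (hGd x) differentiableAt_id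
      rw [this, fderiv_fun_id]
      ext; simp
    rw [e]
    by_contra hne
    have horth : ∀ v, inner ℝ (G x) (fderiv ℝ G x v) = 0 := by
      intro v
      have hd := (hGd x).hasFDerivAt.inner ℝ (hGd x).hasFDerivAt
      have hconst : (fun y => inner ℝ (G y) (G y)) = fun _ => (1:ℝ) := by
        ext y; rw [real_inner_self_eq_norm_sq, h1 y]; norm_num
      rw [hconst] at hd
      have := congrArg (fun L : ESp k →L[ℝ] ℝ => L v) (hd.unique (hasFDerivAt_const (1:ℝ) x))
      simp [fderivInnerCLM_apply, real_inner_comm] at this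
      have h3 := real_inner_comm (G x) (fderiv ℝ G x v)
      linarith
    have hs : Function.Surjective (fderiv ℝ G x) := by
      have hu : IsUnit (LinearMap.det (fderiv ℝ G x : ESp k →ₗ[ℝ] ESp k)) := isUnit_iff_ne_zero.2 hne
      exact (LinearMap.equivOfDetNeZero (fderiv ℝ G x : ESp k →ₗ[ℝ] ESp k) hne).surjective
    obtain ⟨v, hv⟩ := hs (G x)
    have := horth v
    rw [hv, real_inner_self_eq_norm_sq, h1 x] at this
    norm_num at this
  set v : ℕ → ℝ := fun i => δ * (i / (k+2 : ℝ)) with hvdef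
  have hvinj : Set.InjOn v (Finset.range (k+1+1)) := by
    intro i _ j _ hij
    simp only [hvdef] at hij
    have h2 : (k + 2 : ℝ) ≠ 0 := by positivity
    field_simp at hij
    exact_mod_cast hij
  have hv0 : ∀ i, 0 ≤ v i := fun i => by positivity
  have hvδ : ∀ i ∈ Finset.range (k+1+1), v i ≤ δ := by
    intro i hi
    refine mul_le_of_le_one_right hδ.le ?_
    rw [div_le_one (by positivity)]
    have : i ≤ k + 2 := (Finset.mem_range.1 hi).le
    exact_mod_cast this
  have hint : ∀ t : ℝ, IntegrableOn (fun x => (1 + t • fderiv ℝ u x).det) (ball (0:ESp k) 1) := by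
    intro t
    have hc : Continuous fun x => (1 + t • fderiv ℝ u x).det :=
      ContinuousLinearMap.continuous_det.comp (continuous_const.add (hu'.const_smul t))
    exact (hc.continuousOn.integrableOn_compact (isCompact_closedBall (0:ESp k) 1)).mono_set
      ball_subset_closedBall
  have hzero : ∫ x in ball (0:ESp k) 1, (1 + fderiv ℝ u x).det = 0 := by simp [hdet0]
  have hsum : ∫ x in ball (0:ESp k) 1, (1 + fderiv ℝ u x).det = (volume (ball (0:ESp k) 1)).toReal := by
    have : ∀ x, (1 + fderiv ℝ u x).det = _ := fun x => det_interp (fderiv ℝ u x) v hvinj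
    simp_rw [this]
    rw [integral_finsetSum _ (fun i _ => (hint (v i)).const_mul _)]
    simp_rw [integral_const_mul]
    rw [Finset.sum_congr rfl (fun i hi => by rw [hvol (v i) (hv0 i) (hvδ i hi)]),
      ← Finset.sum_mul]
    have hb := congrArg (Polynomial.eval 1) (Lagrange.sum_basis hvinj ⟨0, by simp⟩)
    rw [Polynomial.eval_finsetSum, Polynomial.eval_one] at hb
    rw [hb, one_mul]
  have hpos : 0 < (volume (ball (0:ESp k) 1)).toReal :=
    ENNReal.toReal_pos (measure_ball_pos _ _ one_pos).ne' measure_ball_lt_top.ne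
  linarith

lemma no_avoid {k : ℕ} (ψ₀ : ESp k → ESp k) (hψ₀ : ContinuousOn ψ₀ (closedBall 0 1))
    (hclose₀ : ∀ x ∈ closedBall (0 : ESp k) 1, ‖ψ₀ x - x‖ ≤ 1/4)
    (hne₀ : ∀ x ∈ closedBall (0 : ESp k) 1, ψ₀ x ≠ 0) : False := by
  obtain ⟨ψ, hψ⟩ := ContinuousMap.exists_restrict_eq (isClosed_closedBall (x := (0 : ESp k)) (ε := 1))
    ⟨(closedBall (0 : ESp k) 1).domRestrict ψ₀, continuousOn_iff_continuous_domRestrict.1 hψ₀⟩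
  have hψeq : ∀ x ∈ closedBall (0 : ESp k) 1, ψ x = ψ₀ x := fun x hx =>
    congrArg (fun f => f ⟨x, hx⟩) hψ
  obtain ⟨x₀, hx₀, hmin⟩ := (isCompact_closedBall (0 : ESp k) 1).exists_isMinOn ⟨0, by simp⟩
    hψ₀.norm
  set c := ‖ψ₀ x₀‖ with hc
  have hc0 : 0 < c := norm_pos_iff.2 (hne₀ x₀ hx₀)
  obtain ⟨P, hP, hPd, -⟩ := ψ.continuous.exists_contDiff_approx (ε := fun _ => min c (1/8)) 1
    continuous_const (fun _ => by positivity)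
  let χ : ContDiffBump (0 : ESp k) := ⟨3/4, 1, by norm_num, by norm_num⟩
  set F : ESp k → ESp k := fun x => x + χ x • (P x - x) with hF
  have hFd : ContDiff ℝ 1 F :=
    contDiff_id.add (χ.contDiff.smul ((by exact_mod_cast hP : ContDiff ℝ 1 P).sub contDiff_id))
  have hFid : ∀ x, 1 ≤ ‖x‖ → F x = x := by
    intro x hx
    have : χ x = 0 := χ.zero_of_le_dist (by simpa using hx)
    simp [hF, this]
  have hFne : ∀ x, F x ≠ 0 := by
    intro x h0
    rcases le_or_gt 1 ‖x‖ with h1 | h1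
    · rw [hFid x h1] at h0
      rw [h0, norm_zero] at h1
      norm_num at h1
    have hx : x ∈ closedBall (0 : ESp k) 1 := by simpa using h1.le
    have hd := hPd x
    rw [hψeq x hx, dist_eq_norm] at hd
    rcases le_or_gt ‖x‖ (3/4) with h2 | h2
    · have : χ x = 1 := χ.one_of_mem_closedBall (by simpa [χ] using h2)
      have hPx : P x = 0 := by simpa [hF, this] using h0
      rw [hPx, zero_sub, norm_neg] at hd
      have : c ≤ ‖ψ₀ x‖ := hmin hx
      exact absurd (hd.trans_le (min_le_left _ _)) (not_lt.2 this)
    · have hbound : ‖P x - x‖ ≤ 3/8 := by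
        have e : P x - x = (P x - ψ₀ x) + (ψ₀ x - x) := by abel
        rw [e]
        refine (norm_add_le _ _).trans ?_
        have := hclose₀ x hx
        have := min_le_right c (1/8)
        linarith
      have e : x = - (χ x • (P x - x)) := eq_neg_of_add_eq_zero_left h0
      have h3 : ‖x‖ ≤ 3/8 := by
        rw [e, norm_neg, norm_smul, Real.norm_of_nonneg χ.nonneg]
        exact (mul_le_of_le_one_left (norm_nonneg _) χ.le_one).trans hbound
      linarith
  refine no_retraction (fun x => ‖F x‖⁻¹ • F x) ?_ ?_ ?_
  · exact (ContDiff.inv (hFd.norm ℝ hFne) (fun x => norm_ne_zero_iff.2 (hFne x))).smul hFd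
  · intro x
    rw [norm_smul, norm_inv, norm_norm, inv_mul_cancel₀ (norm_ne_zero_iff.2 (hFne x))]
  · intro x hx
    simp only [hFid x hx.ge, hx, inv_one, one_smul]

/-- A homeomorphic copy of the unit sphere has empty interior. -/
lemma interior_sphere_copy {k : ℕ} (S : Set (ESp k)) (e : S ≃ₜ sphere (0 : ESp k) 1) :
    interior S = ∅ := by
  classical
  by_contra hne
  obtain ⟨p, hp⟩ := nonempty_iff_ne_empty.2 hne
  obtain ⟨ρ, hρ, hball⟩ := Metric.nhds_basis_closedBall.mem_iff.1 (mem_interior_iff_mem_nhds.1 hp)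
  obtain ⟨g, hg⟩ := ContinuousMap.exists_restrict_eq (isClosed_sphere (x := (0 : ESp k)) (ε := 1))
    ⟨fun y => (e.symm y : ESp k), by fun_prop⟩
  have hgeq : ∀ y : sphere (0 : ESp k) 1, g y = (e.symm y : ESp k) := fun y =>
    congrArg (fun f => f y) hg
  obtain ⟨g', hg', hgd, -⟩ := g.continuous.exists_contDiff_approx (ε := fun _ => ρ/8) 1
    continuous_const (fun _ => by positivity)
  have hnull : volume (g' '' sphere (0 : ESp k) 1) = 0 :=
    addHaar_image_eq_zero_of_differentiableOn_of_addHaar_eq_zero volume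
      (hg'.differentiable (by norm_num)).differentiableOn (Measure.addHaar_sphere _ _ _)
  obtain ⟨z, hz, hzn⟩ : ∃ z ∈ ball p (ρ/8), z ∉ g' '' sphere (0 : ESp k) 1 := by
    by_contra hcon
    push Not at hcon
    have := measure_mono_null hcon hnull
    exact (measure_ball_pos volume p (by positivity : 0 < ρ/8)).ne' this
  set h : ESp k → ESp k := fun y => if hy : y ∈ S then (e ⟨y, hy⟩ : ESp k) else 0 with hh
  have hhS : ∀ y (hy : y ∈ S), h y = e ⟨y, hy⟩ := fun y hy => by simp [hh, hy]
  have hhc : ContinuousOn h S := by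
    rw [continuousOn_iff_continuous_domRestrict]
    have : S.domRestrict h = fun y => (e y : ESp k) := by
      ext1 y; exact hhS y y.2
    rw [this]; fun_prop
  have hmaps : ∀ x ∈ closedBall (0 : ESp k) 1, p + ρ • x ∈ S := by
    intro x hx
    apply hball
    rw [mem_closedBall, dist_eq_norm, add_sub_cancel_left, norm_smul, Real.norm_of_nonneg hρ.le]
    exact mul_le_of_le_one_right hρ.le (by simpa using hx)
  refine no_avoid (fun x => ρ⁻¹ • (g' (h (p + ρ • x)) - z)) ?_ ?_ ?_
  · have h1 : ContinuousOn (fun x : ESp k => h (p + ρ • x)) (closedBall 0 1) :=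
      hhc.comp (by fun_prop) hmaps
    have h2 : ContinuousOn (fun x : ESp k => g' (h (p + ρ • x))) (closedBall 0 1) :=
      hg'.continuous.comp_continuousOn h1
    exact (h2.sub (continuousOn_const (c := z))).const_smul (ρ⁻¹)
  · intro x hx
    have hxS := hmaps x hx
    have hd := hgd (h (p + ρ • x))
    rw [hhS _ hxS, hgeq, e.symm_apply_apply, dist_eq_norm] at hd
    rw [mem_ball, dist_eq_norm] at hz
    have heq : ρ⁻¹ • (g' (h (p + ρ • x)) - z) - x
        = ρ⁻¹ • ((g' (h (p + ρ • x)) - (p + ρ • x)) - (z - p)) := by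
      have : x = ρ⁻¹ • (ρ • x) := by rw [inv_smul_smul₀ hρ.ne']
      conv_lhs => rw [this]
      rw [← smul_sub, ← this]
      congr 1; abel
    simp only [heq, norm_smul, norm_inv, Real.norm_of_nonneg hρ.le]
    rw [inv_mul_le_iff₀ hρ, hhS _ hxS]
    refine (norm_sub_le _ _).trans ?_
    linarith
  · intro x hx h0
    have h1 : g' (h (p + ρ • x)) = z := by
      rcases smul_eq_zero.1 h0 with h2 | h2
      · exact absurd h2 (inv_ne_zero hρ.ne')
      · exact sub_eq_zero.1 h2
    refine hzn ⟨_, ?_, h1⟩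
    rw [hhS _ (hmaps x hx)]
    exact (e _).2

end Topo

lemma preconn_glue {X : Type*} [TopologicalSpace X] {R Sj Sk : Set X} (hR : IsOpen R)
    (hj : interior Sj = ∅) (hk : interior Sk = ∅) (A B : Fin 2 → Set X)
    (hA : ∀ x, x ∉ Sj → ∃ a, x ∈ A a) (hB : ∀ x, x ∉ Sk → ∃ b, x ∈ B b)
    (hAc : ∀ a, IsPreconnected (R ∩ A a)) (hBc : ∀ b, IsPreconnected (R ∩ B b))
    (hAB : ∀ a b, (R ∩ A a ∩ B b).Nonempty) : IsPreconnected R := by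
  have key : ∀ (T : Set X) (C : Fin 2 → Set X), interior T = ∅ → (∀ x, x ∉ T → ∃ a, x ∈ C a) →
      ∀ u v : Set X, IsOpen v → R ⊆ u ∪ v → R ∩ (u ∩ v) = ∅ → (∀ a, R ∩ C a ⊆ u) → R ⊆ u := by
    intro T C hT hC u v hv huv hd hCu x hx
    by_contra hxu
    have hsub : R ∩ v ⊆ T := by
      intro y hy
      by_contra hyT
      obtain ⟨a, ha⟩ := hC y hyT
      have : y ∈ R ∩ (u ∩ v) := ⟨hy.1, hCu a ⟨hy.1, ha⟩, hy.2⟩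
      rw [hd] at this
      exact this
    have hxv : x ∈ R ∩ v := ⟨hx, (huv hx).resolve_left hxu⟩
    have : x ∈ interior T := interior_maximal hsub (hR.inter hv) hxv
    rw [hT] at this
    exact this
  rw [isPreconnected_iff_subset_of_disjoint]
  intro u v hu hv huv hd
  have hd' : R ∩ (v ∩ u) = ∅ := by rwa [inter_comm v u]
  have huv' : R ⊆ v ∪ u := by rwa [union_comm v u]
  have split : ∀ C : Set X, IsPreconnected (R ∩ C) → R ∩ C ⊆ u ∨ R ∩ C ⊆ v := by
    intro C hC
    refine isPreconnected_iff_subset_of_disjoint.1 hC u v hu hv (inter_subset_left.trans huv) ?_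
    exact subset_eq_empty (inter_subset_inter_left _ inter_subset_left) hd
  have clash : ∀ a b, R ∩ A a ⊆ u → R ∩ B b ⊆ v → False := by
    intro a b h1 h2
    obtain ⟨x, hx⟩ := hAB a b
    have : x ∈ R ∩ (u ∩ v) := ⟨hx.1.1, h1 hx.1, h2 ⟨hx.1.1, hx.2⟩⟩
    rw [hd] at this
    exact this
  by_cases h1 : ∃ a, R ∩ A a ⊆ u
  · obtain ⟨a, ha⟩ := h1
    exact Or.inl (key Sk B hk hB u v hv huv hd fun b =>
      (split _ (hBc b)).resolve_right fun h => clash a b ha h)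
  · push Not at h1
    exact Or.inr (key Sj A hj hA v u hu huv' hd' fun a =>
      (split _ (hAc a)).resolve_left (h1 a))

lemma surfSide_open {E : Type*} [MetricSpace E] [LocallyConnectedSpace E] {S : Set E}
    (hS : IsClosed S) (a : Fin 2) : IsOpen (surfSide S a) := by
  rw [isOpen_iff_mem_nhds]
  intro x hx
  have hxS : x ∈ Sᶜ := by
    unfold surfSide at hx
    split_ifs at hx <;> exact hx.1
  filter_upwards [hS.isOpen_compl.connectedComponentIn.mem_nhds (mem_connectedComponentIn hxS)]
    with y hy
  have hyS : y ∉ S := connectedComponentIn_subset _ _ hy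
  have heq := connectedComponentIn_eq hy
  unfold surfSide at hx ⊢
  split_ifs at hx ⊢
  · exact ⟨hyS, heq ▸ hx.2⟩
  · exact ⟨hyS, heq ▸ hx.2⟩

lemma surfSide_cover {E : Type*} [MetricSpace E] {S : Set E} (x : E) (hx : x ∉ S) :
    ∃ a, x ∈ surfSide S a := by
  by_cases h : IsBounded (connectedComponentIn Sᶜ x)
  · exact ⟨0, by simp [surfSide, hx, h]⟩
  · exact ⟨1, by simp [surfSide, hx, h]⟩

/-- **Step (1) in the proof of Theorem 2.** If `V` is a simple `m`-dimensional Venn diagram,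
`1 < r < n`, and every subset of `V` of size `r` is a Venn diagram, then every subset of
`V` of size `r - 1` is also a Venn diagram. -/
theorem subsets_card_pred_venn (m n r : ℕ) (hm : 2 ≤ m) (hr : 1 < r) (hrn : r < n)
    (S : Fin n → Set (EuclideanSpace ℝ (Fin m)))
    (hV : IsSimpleVennDiagram m S)
    (hsub : ∀ t : Finset (Fin n), t.card = r →
      IsVennDiagram m (fun i : {x // x ∈ t} => S i.1)) :
    ∀ t : Finset (Fin n), t.card = r - 1 →
      IsVennDiagram m (fun i : {x // x ∈ t} => S i.1) := by
  classical
  obtain ⟨k, rfl⟩ : ∃ k, m = k + 1 := ⟨m - 1, by omega⟩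
  intro t ht
  have hint : ∀ i, interior (S i) = ∅ := fun i => by
    obtain ⟨e⟩ := (hV.1.1 i).2
    exact interior_sphere_copy (S i) e
  refine ⟨fun i => hV.1.1 i.1, fun ε => ?_, fun i j hij => hV.1.2.2 i.1 j.1
    (fun h => hij (Subtype.ext h))⟩
  set R := ⋂ i : {x // x ∈ t}, surfSide (S i.1) (ε i) with hR
  have hRo : IsOpen R := isOpen_iInter_of_finite fun i =>
    surfSide_open (hV.1.1 i.1).1.isClosed (ε i)
  obtain ⟨j, hj, l, hl, hjl⟩ : ∃ j ∈ tᶜ, ∃ l ∈ tᶜ, j ≠ l := by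
    apply Finset.one_lt_card.1
    rw [Finset.card_compl, Fintype.card_fin]
    omega
  rw [Finset.mem_compl] at hj hl
  have hne : ∀ a b, (R ∩ surfSide (S j) a ∩ surfSide (S l) b).Nonempty := by
    intro a b
    obtain ⟨x, hx⟩ := (hV.1.2.1 (fun i => if h : i ∈ t then ε ⟨i, h⟩ else
      if i = j then a else b)).1
    rw [mem_iInter] at hx
    refine ⟨x, ⟨mem_iInter.2 fun i => ?_, ?_⟩, ?_⟩
    · simpa [i.2] using hx i.1
    · simpa [hj] using hx j
    · simpa [hl, hjl.symm] using hx l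
  have hconn : ∀ q, q ∉ t → ∀ a, IsPreconnected (R ∩ surfSide (S q) a) := by
    intro q hq a
    have hc := ((hsub (insert q t) (by rw [Finset.card_insert_of_notMem hq]; omega)).2.1
      (fun i => if h : i.1 ∈ t then ε ⟨i.1, h⟩ else a)).2.isPreconnected
    refine Eq.mpr (congrArg IsPreconnected (Set.ext fun x => ?_)) hc
    simp only [hR, mem_inter_iff, mem_iInter]
    constructor
    · rintro ⟨h1, h2⟩ i
      by_cases hi : i.1 ∈ t
      · simpa [hi] using h1 ⟨i.1, hi⟩
      · have : i.1 = q := (Finset.mem_insert.1 i.2).resolve_right hi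
        simpa [this, hq] using h2
    · intro h
      refine ⟨fun i => ?_, ?_⟩
      · simpa [i.2] using h ⟨i.1, Finset.mem_insert_of_mem i.2⟩
      · simpa [hq] using h ⟨q, Finset.mem_insert_self q t⟩
  have hRne : R.Nonempty := by
    obtain ⟨x, hx⟩ := hne 0 0
    exact ⟨x, hx.1.1⟩
  exact ⟨hRne, hRne, preconn_glue hRo (hint j) (hint l) (surfSide (S j)) (surfSide (S l))
    surfSide_cover surfSide_cover (hconn j hj) (hconn l hl) hne⟩
end

section
/- Let V = {S_1, ..., S_n} be a simple m-dimensional n-Venn diagram. If V is fully reducible, then n ≤ m + 1. -/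
open Set Metric Bornology

namespace VennAux

section Chains

variable {V : Type}

/-- Formal chains: rational combinations of finite lists of points. -/
abbrev Ch (V : Type) := List V →₀ ℚ

noncomputable def cone (v : V) : Ch V →ₗ[ℚ] Ch V := Finsupp.lmapDomain ℚ ℚ (List.cons v)

noncomputable def bdL : List V → Ch V
  | [] => 0
  | v :: l => Finsupp.single l 1 - cone v (bdL l)

noncomputable def bd : Ch V →ₗ[ℚ] Ch V := Finsupp.linearCombination ℚ bdL

lemma cone_single (v : V) (l : List V) (r : ℚ) :
    cone v (Finsupp.single l r) = Finsupp.single (v :: l) r := by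
  simp [cone, Finsupp.lmapDomain_apply, Finsupp.mapDomain_single]

lemma bd_single (l : List V) : bd (Finsupp.single l 1) = bdL l := by
  simp [bd]

lemma mem_of_supported {P : Set (List V)} {f : Ch V →ₗ[ℚ] Ch V} {N : Submodule ℚ (Ch V)}
    (h : ∀ l ∈ P, f (Finsupp.single l 1) ∈ N) {c : Ch V}
    (hc : c ∈ Finsupp.supported ℚ ℚ P) : f c ∈ N := by
  rw [Finsupp.supported_eq_span_single] at hc
  have : Submodule.span ℚ ((fun i : List V => (Finsupp.single i 1 : Ch V)) '' P) ≤ N.comap f := by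
    rw [Submodule.span_le]
    rintro _ ⟨l, hl, rfl⟩
    exact h l hl
  exact this hc

lemma eq_of_supported {P : Set (List V)} {f g : Ch V →ₗ[ℚ] Ch V}
    (h : ∀ l ∈ P, f (Finsupp.single l 1) = g (Finsupp.single l 1)) {c : Ch V}
    (hc : c ∈ Finsupp.supported ℚ ℚ P) : f c = g c := by
  have := mem_of_supported (f := f - g) (N := ⊥) (P := P) (by
    intro l hl; simp [h l hl]) hc
  simpa [sub_eq_zero] using this

lemma bd_cone (v : V) (c : Ch V) : bd (cone v c) = c - cone v (bd c) := by
  have : (bd ∘ₗ cone v : Ch V →ₗ[ℚ] Ch V) c = (LinearMap.id - cone v ∘ₗ bd : Ch V →ₗ[ℚ] Ch V) c := by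
    refine eq_of_supported (P := univ) ?_ (by simp)
    intro l _
    simp only [LinearMap.comp_apply, LinearMap.sub_apply, LinearMap.id_apply, cone_single,
      bd_single, bdL]
  simpa using this

lemma bd_bdL (l : List V) : bd (bdL l) = 0 := by
  induction l with
  | nil => simp [bdL]
  | cons v l ih =>
    simp only [bdL, map_sub, bd_single, bd_cone, ih, map_zero]
    abel

lemma bd_bd (c : Ch V) : bd (bd c) = 0 := by
  have : (bd ∘ₗ bd : Ch V →ₗ[ℚ] Ch V) c = (0 : Ch V →ₗ[ℚ] Ch V) c := by
    refine eq_of_supported (P := univ) ?_ (by simp)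
    intro l _
    simp [bd_single, bd_bdL]
  simpa using this

lemma single_mem {P : Set (List V)} {l : List V} (h : l ∈ P) :
    (Finsupp.single l 1 : Ch V) ∈ Finsupp.supported ℚ ℚ P :=
  Finsupp.single_mem_supported ℚ 1 h

lemma bdL_mem (l : List V) : bdL l ∈ Finsupp.supported ℚ ℚ
    {l' : List V | l'.length + 1 = l.length ∧ ∀ x ∈ l', x ∈ l} := by
  induction l with
  | nil => simp [bdL]
  | cons v l ih =>
    refine Submodule.sub_mem _ (single_mem ?_) (mem_of_supported ?_ ih)
    · simp +contextual
    · rintro l' ⟨h1, h2⟩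
      rw [cone_single]
      refine single_mem ⟨by simp [h1], ?_⟩
      intro x hx
      rcases List.mem_cons.1 hx with h | h
      · simp [h]
      · exact List.mem_cons_of_mem _ (h2 x h)

end Chains

section Affine

variable {V : Type} [NormedAddCommGroup V] [NormedSpace ℝ V]

/-- convex hull of the points of a list -/
def hull (l : List V) : Set V := convexHull ℝ {x | x ∈ l}

/-- Chains of length `n` whose simplices are contained in `U`. -/
noncomputable def C (n : ℕ) (U : Set V) : Submodule ℚ (Ch V) :=
  Finsupp.supported ℚ ℚ {l : List V | l.length = n ∧ hull l ⊆ U}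

lemma hull_mono {l l' : List V} (h : ∀ x ∈ l', x ∈ l) : hull l' ⊆ hull l :=
  convexHull_mono h

lemma subset_hull {l : List V} {x : V} (h : x ∈ l) : x ∈ hull l := subset_convexHull ℝ _ h

lemma C_mono {n : ℕ} {U U' : Set V} (h : U ⊆ U') : C n U ≤ C n U' :=
  Finsupp.supported_mono fun _ hl => ⟨hl.1, hl.2.trans h⟩

lemma C_inter (n : ℕ) (U U' : Set V) : C n (U ∩ U') = C n U ⊓ C n U' := by
  rw [C, C, C, ← Finsupp.supported_inter]
  congr 1
  ext l
  simp only [mem_ofPred_eq, subset_inter_iff, mem_inter_iff]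
  tauto

lemma bd_C {n : ℕ} {U : Set V} {c : Ch V} (hc : c ∈ C (n + 1) U) : bd c ∈ C n U := by
  refine mem_of_supported ?_ hc
  rintro l ⟨h1, h2⟩
  rw [bd_single]
  refine Finsupp.supported_mono ?_ (bdL_mem l)
  rintro l' ⟨h3, h4⟩
  exact ⟨by omega, (hull_mono h4).trans h2⟩

lemma bd_C_zero {U : Set V} {c : Ch V} (hc : c ∈ C 0 U) : bd c = 0 := by
  have : bd c ∈ (⊥ : Submodule ℚ (Ch V)) := by
    refine mem_of_supported ?_ hc
    rintro l ⟨h1, h2⟩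
    rw [List.length_eq_zero_iff] at h1
    subst h1
    rw [bd_single]; simp [bdL]
  simpa using this

noncomputable def bary (l : List V) : V := (l.length : ℝ)⁻¹ • l.sum

lemma bary_mem {l : List V} (h : l ≠ []) : bary l ∈ hull l := by
  have hl : (0:ℝ) < l.length := by
    have := List.length_pos_iff.2 h
    exact_mod_cast this
  have : bary l = ∑ i : Fin l.length, (l.length : ℝ)⁻¹ • l.get i := by
    rw [← Finset.smul_sum, bary]
    congr 1
    rw [← List.sum_ofFn]; simp
  rw [this]
  refine (convex_convexHull ℝ _).sum_mem (fun _ _ => by positivity) ?_ ?_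
  · simp [hl.ne']
  · intro i _
    exact subset_convexHull ℝ _ (List.get_mem _ _)

lemma dist_sum_le (l : List V) (x : V) {d : ℝ} (h : ∀ y ∈ l, dist y x ≤ d) :
    ‖l.sum - (l.length : ℝ) • x‖ ≤ l.length * d := by
  induction l with
  | nil => simp
  | cons a l ih =>
    have h1 := ih (fun y hy => h y (List.mem_cons_of_mem _ hy))
    have h2 := h a (by simp)
    rw [dist_eq_norm] at h2
    have : (a :: l).sum - ((a :: l).length : ℝ) • x = (a - x) + (l.sum - (l.length : ℝ) • x) := by
      simp only [List.sum_cons, List.length_cons]; push_cast; module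
    rw [this]
    refine (norm_add_le _ _).trans ?_
    simp only [List.length_cons]; push_cast; linarith

lemma dist_bary_le {n : ℕ} {l : List V} (hn : l.length = n + 1) {d : ℝ}
    (h : ∀ x ∈ l, ∀ y ∈ l, dist x y ≤ d) {x : V} (hx : x ∈ l) :
    dist x (bary l) ≤ n / (n + 1) * d := by
  classical
  have hp := List.perm_cons_erase hx
  have hs : l.sum = x + (l.erase x).sum := by rw [hp.sum_eq]; simp
  have hlen : (l.erase x).length = n := by rw [List.length_erase_of_mem hx]; omega
  have key := dist_sum_le (l.erase x) x (d := d)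
    (fun y hy => h y (List.mem_of_mem_erase hy) x hx)
  rw [hlen] at key
  have : bary l - x = ((n : ℝ) + 1)⁻¹ • ((l.erase x).sum - (n : ℝ) • x) := by
    rw [bary, hn, hs]
    have : ((n:ℝ)+1) ≠ 0 := by positivity
    have e : x = ((n:ℝ)+1)⁻¹ • (((n:ℝ)+1) • x) := by rw [smul_smul, inv_mul_cancel₀ this, one_smul]
    conv_lhs => rw [e]
    push_cast
    rw [← e]
    conv_lhs => 
      rhs
      rw [e]
    module
  rw [dist_comm, dist_eq_norm, this, norm_smul, norm_inv, Real.norm_of_nonneg (by positivity)]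
  calc ((n:ℝ)+1)⁻¹ * _ ≤ ((n:ℝ)+1)⁻¹ * (n * d) := by gcongr
    _ = _ := by ring

lemma dist_bary_hull_le {n : ℕ} {l : List V} (hn : l.length = n + 1) {d : ℝ}
    (h : ∀ x ∈ l, ∀ y ∈ l, dist x y ≤ d) {x : V} (hx : x ∈ hull l) :
    dist x (bary l) ≤ n / (n + 1) * d := by
  have : hull l ⊆ closedBall (bary l) (n / (n + 1) * d) :=
    convexHull_min (fun y hy => dist_bary_le hn h hy) (convex_closedBall _ _)
  exact this hx

noncomputable def sd : ℕ → (Ch V →ₗ[ℚ] Ch V)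
  | 0 => LinearMap.id
  | n + 1 => Finsupp.linearCombination ℚ (fun l => cone (bary l) (sd n (bdL l)))

noncomputable def sT : ℕ → (Ch V →ₗ[ℚ] Ch V)
  | 0 => 0
  | n + 1 => Finsupp.linearCombination ℚ
      (fun l => cone (bary l) (Finsupp.single l 1 - sT n (bdL l)))

/-- chains with simplices in `A` and of mesh at most `d` -/
noncomputable def Cd (n : ℕ) (A : Set V) (d : ℝ) : Submodule ℚ (Ch V) :=
  Finsupp.supported ℚ ℚ
    {l : List V | l.length = n ∧ hull l ⊆ A ∧ ∀ x ∈ l, ∀ y ∈ l, dist x y ≤ d}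

lemma Cd_mono {n : ℕ} {A A' : Set V} {d d' : ℝ} (h : A ⊆ A') (hd : d ≤ d') :
    Cd n A d ≤ Cd n A' d' :=
  Finsupp.supported_mono fun _ hl =>
    ⟨hl.1, hl.2.1.trans h, fun x hx y hy => (hl.2.2 x hx y hy).trans hd⟩

lemma hull_cons_subset {v : V} {l : List V} {A : Set V} (hA : Convex ℝ A) (hv : v ∈ A)
    (hl : hull l ⊆ A) : hull (v :: l) ⊆ A := by
  refine convexHull_min ?_ hA
  intro x hx
  rcases List.mem_cons.1 hx with h | h
  · rwa [h]
  · exact hl (subset_hull h)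

lemma convex_hull (l : List V) : Convex ℝ (hull l) := convex_convexHull ℝ _

lemma sd_mem (n : ℕ) {d : ℝ} (hd : 0 ≤ d) (l : List V) (hl : l.length = n)
    (h : ∀ x ∈ l, ∀ y ∈ l, dist x y ≤ d) :
    sd n (Finsupp.single l 1) ∈ Cd n (hull l) (n / (n + 1) * d) := by
  induction n generalizing l with
  | zero =>
    rw [List.length_eq_zero_iff] at hl
    subst hl
    exact single_mem (by simp)
  | succ n ih =>
    simp only [sd, Finsupp.linearCombination_single, one_smul]
    have h1 : sd n (bdL l) ∈ Cd n (hull l) (n / (n + 1) * d) := by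
      refine mem_of_supported ?_ (bdL_mem l)
      rintro l' ⟨h3, h4⟩
      exact Cd_mono (hull_mono h4) le_rfl
        (ih l' (by omega) (fun x hx y hy => h x (h4 x hx) y (h4 y hy)))
    have hr : (n : ℝ) / (n + 1) * d ≤ ((n + 1 : ℕ) : ℝ) / ((n + 1 : ℕ) + 1) * d := by
      refine mul_le_mul_of_nonneg_right ?_ hd
      push_cast
      rw [div_le_div_iff₀ (by positivity) (by positivity)]
      nlinarith
    have hb : bary l ∈ hull l := bary_mem (by rintro rfl; simp at hl)
    refine mem_of_supported ?_ h1
    rintro l' ⟨h3, h4, h5⟩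
    rw [cone_single]
    refine single_mem ⟨by simp [h3], hull_cons_subset (convex_hull l) hb h4, ?_⟩
    have h6 : ∀ x ∈ l', dist x (bary l) ≤ n / (n + 1) * d := fun x hx =>
      dist_bary_hull_le hl h (h4 (subset_hull hx))
    have h0 : 0 ≤ ((n + 1 : ℕ) : ℝ) / ((n + 1 : ℕ) + 1) * d := by positivity
    intro x hx y hy
    rcases List.mem_cons.1 hx with hx | hx <;> rcases List.mem_cons.1 hy with hy | hy
    · rw [hx, hy, dist_self]; exact h0
    · rw [hx, dist_comm]; exact (h6 y hy).trans hr
    · rw [hy]; exact (h6 x hx).trans hr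
    · exact (h5 x hx y hy).trans hr

lemma sd_Cd {n : ℕ} {A : Set V} {d : ℝ} (hd : 0 ≤ d) {c : Ch V} (hc : c ∈ Cd n A d) :
    sd n c ∈ Cd n A (n / (n + 1) * d) := by
  refine mem_of_supported ?_ hc
  rintro l ⟨h1, h2, h3⟩
  exact Cd_mono h2 le_rfl (sd_mem n hd l h1 h3)

lemma exists_Cd {n : ℕ} {A : Set V} {c : Ch V} (hc : c ∈ C n A) :
    ∃ d, 0 ≤ d ∧ c ∈ Cd n A d := by
  have hl : ∀ l : List V, ∃ d : ℝ, 0 ≤ d ∧ ∀ x ∈ l, ∀ y ∈ l, dist x y ≤ d := by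
    intro l
    have : Bornology.IsBounded {x | x ∈ l} := (List.finite_toSet l).isBounded
    obtain ⟨d, hd⟩ := isBounded_iff.1 this
    exact ⟨max d 0, le_max_right _ _, fun x hx y hy => (hd hx hy).trans (le_max_left _ _)⟩
  choose D hD0 hD using hl
  refine ⟨∑ l ∈ c.support, D l, Finset.sum_nonneg fun l _ => hD0 l, ?_⟩
  intro l hl
  obtain ⟨h1, h2⟩ := hc hl
  refine ⟨h1, h2, fun x hx y hy => (hD l x hx y hy).trans ?_⟩
  exact Finset.single_le_sum (f := D) (fun l _ => hD0 l) hl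

lemma Cd_le_C {n : ℕ} {A : Set V} {d : ℝ} : Cd n A d ≤ C n A :=
  Finsupp.supported_mono fun _ hl => ⟨hl.1, hl.2.1⟩

lemma sd_C {n : ℕ} {A : Set V} {c : Ch V} (hc : c ∈ C n A) : sd n c ∈ C n A := by
  obtain ⟨d, hd, h⟩ := exists_Cd hc
  exact Cd_le_C (sd_Cd hd h)

lemma sT_C {n : ℕ} {A : Set V} {c : Ch V} (hc : c ∈ C n A) : sT n c ∈ C (n + 1) A := by
  induction n generalizing A c with
  | zero => simp [sT]
  | succ n ih =>
    refine mem_of_supported ?_ hc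
    rintro l ⟨h1, h2⟩
    simp only [sT, Finsupp.linearCombination_single, one_smul]
    have hl : (Finsupp.single l 1 : Ch V) ∈ C (n + 1) (hull l) := single_mem ⟨h1, subset_rfl⟩
    have h3 : (Finsupp.single l 1 - sT n (bdL l) : Ch V) ∈ C (n + 1) (hull l) := by
      refine Submodule.sub_mem _ hl (ih ?_)
      rw [← bd_single]; exact bd_C hl
    have hb : bary l ∈ hull l := bary_mem (by rintro rfl; simp at h1)
    refine mem_of_supported ?_ h3
    rintro l' ⟨h4, h5⟩
    rw [cone_single]
    exact single_mem ⟨by simp [h4], (hull_cons_subset (convex_hull l) hb h5).trans h2⟩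

lemma bd_sd {n : ℕ} {c : Ch V} (hc : c ∈ C (n + 1) univ) :
    bd (sd (n + 1) c) = sd n (bd c) := by
  induction n generalizing c with
  | zero =>
    have : (bd ∘ₗ sd 1 : Ch V →ₗ[ℚ] Ch V) c = (sd 0 ∘ₗ bd) c := by
      refine eq_of_supported ?_ hc
      rintro l ⟨h1, h2⟩
      have h3 : bd (bdL l) = 0 := bd_bdL l
      simp [sd, bd_cone, bd_single, h3]
    simpa using this
  | succ n ih =>
    have : (bd ∘ₗ sd (n + 2) : Ch V →ₗ[ℚ] Ch V) c = (sd (n + 1) ∘ₗ bd) c := by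
      refine eq_of_supported ?_ hc
      rintro l ⟨h1, h2⟩
      have hl : (Finsupp.single l 1 : Ch V) ∈ C (n + 2) univ := single_mem ⟨h1, h2⟩
      have h3 := ih (bd_C hl)
      rw [bd_single, bd_bdL, map_zero] at h3
      rw [LinearMap.comp_apply, LinearMap.comp_apply, bd_single]
      conv_lhs => rw [sd]
      rw [Finsupp.linearCombination_single, one_smul, bd_cone, h3]
      simp
    simpa using this

lemma bd_sT {n : ℕ} {c : Ch V} (hc : c ∈ C (n + 1) univ) :
    bd (sT (n + 1) c) = c - sd (n + 1) c - sT n (bd c) := by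
  induction n generalizing c with
  | zero =>
    have : (bd ∘ₗ sT 1 : Ch V →ₗ[ℚ] Ch V) c =
        (LinearMap.id - sd 1 - sT 0 ∘ₗ bd : Ch V →ₗ[ℚ] Ch V) c := by
      refine eq_of_supported ?_ hc
      rintro l ⟨h1, h2⟩
      simp [sd, sT, bd_cone, bd_single]
    simpa using this
  | succ n ih =>
    have : (bd ∘ₗ sT (n + 2) : Ch V →ₗ[ℚ] Ch V) c
        = (LinearMap.id - sd (n + 2) - sT (n + 1) ∘ₗ bd : Ch V →ₗ[ℚ] Ch V) c := by
      refine eq_of_supported ?_ hc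
      rintro l ⟨h1, h2⟩
      have hl : (Finsupp.single l 1 : Ch V) ∈ C (n + 2) univ := single_mem ⟨h1, h2⟩
      have h3 := ih (bd_C hl)
      rw [bd_single, bd_bdL, map_zero] at h3
      simp only [LinearMap.comp_apply, LinearMap.sub_apply, LinearMap.id_apply, bd_single]
      conv_lhs => rw [sT]
      rw [Finsupp.linearCombination_single, one_smul, bd_cone, map_sub, bd_single, h3]
      conv_rhs => rw [sd]
      rw [Finsupp.linearCombination_single, one_smul]
      simp only [map_sub, map_zero]
      abel
    simpa using this

/-- An admissible pair of subdivision operator and chain homotopy. -/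
structure IsSub (s D : ℕ → (Ch V →ₗ[ℚ] Ch V)) : Prop where
  s_mem : ∀ n (U : Set V) c, c ∈ C n U → s n c ∈ C n U
  D_mem : ∀ n (U : Set V) c, c ∈ C n U → D n c ∈ C (n + 1) U
  bd_s : ∀ n c, c ∈ C (n + 1) univ → bd (s (n + 1) c) = s n (bd c)
  bd_D : ∀ n c, c ∈ C n univ → bd c = 0 → bd (D n c) = c - s n c

lemma isSub_iter (N : ℕ) : ∃ D, IsSub (V := V) (fun n => (sd n) ^ N) D := by
  induction N with
  | zero =>
    refine ⟨0, ⟨by simp, by simp, by simp, by simp⟩⟩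
  | succ N ih =>
    obtain ⟨D, hD⟩ := ih
    refine ⟨fun n => D n + sT n ∘ₗ (sd n ^ N), ⟨?_, ?_, ?_, ?_⟩⟩
    · intro n U c hc
      simp only [pow_succ', Module.End.mul_apply]
      exact sd_C (hD.s_mem n U c hc)
    · intro n U c hc
      exact Submodule.add_mem _ (hD.D_mem n U c hc) (sT_C (hD.s_mem n U c hc))
    · intro n c hc
      simp only [pow_succ', Module.End.mul_apply]
      rw [bd_sd (hD.s_mem _ _ c hc), hD.bd_s n c hc]
    · intro n c hc h0
      have h1 := hD.bd_D n c hc h0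
      have hs : bd ((sd n ^ N) c) = 0 := by
        have := congrArg bd h1
        rw [bd_bd, map_sub, h0] at this
        simpa using this.symm
      have hm : (sd n ^ N) c ∈ C n univ := hD.s_mem n univ c hc
      simp only [LinearMap.add_apply, LinearMap.comp_apply, map_add, h1, pow_succ',
        Module.End.mul_apply]
      cases n with
      | zero => simp [sT, sd]
      | succ n =>
        rw [bd_sT hm, hs]; simp

lemma sd_pow_Cd {n : ℕ} {A : Set V} {d : ℝ} (hd : 0 ≤ d) {c : Ch V} (hc : c ∈ Cd n A d) (N : ℕ) :
    (sd n ^ N) c ∈ Cd n A ((n / (n + 1) : ℝ) ^ N * d) := by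
  induction N with
  | zero => simpa using hc
  | succ N ih =>
    have := sd_Cd (by positivity) ih
    rw [pow_succ' (sd n), Module.End.mul_apply, pow_succ' (_ : ℝ), mul_assoc]; exact this

lemma isCompact_hull (l : List V) : IsCompact (hull l) :=
  (List.finite_toSet l).isCompact_convexHull ℝ

/-- Lebesgue number for a chain. -/
lemma exists_lebesgue {n : ℕ} {U1 U2 : Set V} (h1 : IsOpen U1) (h2 : IsOpen U2) (c : Ch V)
    (hc : c ∈ C n (U1 ∪ U2)) : ∃ δ > 0, ∃ A : Set V, c ∈ C n A ∧
      ∀ x ∈ A, ball x δ ⊆ U1 ∨ ball x δ ⊆ U2 := by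
  set A : Set V := ⋃ l ∈ c.support, hull l with hA
  have hAc : IsCompact A := c.support.isCompact_biUnion fun l _ => isCompact_hull l
  have hAU : A ⊆ ⋃ b : Bool, (if b then U1 else U2) := by
    intro x hx
    simp only [hA, mem_iUnion] at hx
    obtain ⟨l, hl, hx⟩ := hx
    rcases (hc hl).2 hx with h | h
    · exact mem_iUnion.2 ⟨true, by simpa using h⟩
    · exact mem_iUnion.2 ⟨false, by simpa using h⟩
  obtain ⟨δ, hδ, H⟩ := lebesgue_number_lemma_of_metric hAc
    (by intro b; cases b <;> simpa) hAU
  refine ⟨δ, hδ, A, ?_, ?_⟩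
  · intro l hl
    refine ⟨(hc hl).1, ?_⟩
    intro x hx
    simp only [hA, mem_iUnion]
    exact ⟨l, hl, hx⟩
  · intro x hx
    obtain ⟨b, hb⟩ := H x hx
    cases b
    · right; simpa using hb
    · left; simpa using hb

lemma exists_sub {n : ℕ} {U1 U2 : Set V} (h1 : IsOpen U1) (h2 : IsOpen U2) (c : Ch V)
    (hc : c ∈ C n (U1 ∪ U2)) : ∃ s D, IsSub (V := V) s D ∧
      ∃ a ∈ C n U1, ∃ b ∈ C n U2, s n c = a + b := by
  obtain ⟨δ, hδ, A, hcA, hA⟩ := exists_lebesgue h1 h2 c hc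
  obtain ⟨d, hd, hcd⟩ := exists_Cd hcA
  have hr : (n / (n + 1) : ℝ) < 1 := by rw [div_lt_one (by positivity)]; linarith
  have ht : Filter.Tendsto (fun N : ℕ => (n / (n + 1) : ℝ) ^ N * d) Filter.atTop (nhds (0 * d)) :=
    (tendsto_pow_atTop_nhds_zero_of_lt_one (by positivity) hr).mul_const d
  rw [zero_mul] at ht
  obtain ⟨N, hN⟩ := (ht.eventually (gt_mem_nhds hδ)).exists
  obtain ⟨D, hD⟩ := isSub_iter (V := V) N
  refine ⟨_, D, hD, ?_⟩
  have hm := sd_pow_Cd hd hcd N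
  have : (sd n ^ N) c ∈ C n U1 ⊔ C n U2 := by
    rw [C, C, ← Finsupp.supported_union]
    refine Finsupp.supported_mono ?_ hm
    rintro l ⟨h3, h4, h5⟩
    cases l with
    | nil => left; exact ⟨h3, by simp [hull]⟩
    | cons v l =>
      have hs : hull (v :: l) ⊆ ball v δ :=
        convexHull_min (fun y hy => (h5 y hy v (by simp)).trans_lt hN) (convex_ball _ _)
      rcases hA v (h4 (subset_hull (by simp))) with h | h
      · left; exact ⟨h3, hs.trans h⟩
      · right; exact ⟨h3, hs.trans h⟩
  obtain ⟨a, ha, b, hb, hab⟩ := Submodule.mem_sup.1 this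
  exact ⟨a, ha, b, hb, hab.symm⟩

end Affine
end VennAux

namespace VennAux
section Homology

variable {V : Type} [NormedAddCommGroup V] [NormedSpace ℝ V]

/-- cycles -/
noncomputable def Z (n : ℕ) (U : Set V) : Submodule ℚ (Ch V) := C n U ⊓ LinearMap.ker bd

/-- boundaries -/
noncomputable def B (n : ℕ) (U : Set V) : Submodule ℚ (Ch V) := (C (n + 1) U).map bd

/-- reduced homology (degree shifted by one) -/
abbrev H (n : ℕ) (U : Set V) : Type := (Z n U) ⧸ (B n U).submoduleOf (Z n U)

def Acyc (n : ℕ) (U : Set V) : Prop := Z n U ≤ B n U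

noncomputable def beta (n : ℕ) (U : Set V) : Cardinal := Module.rank ℚ (H n U)

lemma mem_Z {n : ℕ} {U : Set V} {c : Ch V} : c ∈ Z n U ↔ c ∈ C n U ∧ bd c = 0 := by
  simp [Z]

lemma mem_B {n : ℕ} {U : Set V} {c : Ch V} : c ∈ B n U ↔ ∃ e ∈ C (n + 1) U, bd e = c := by
  simp [B]

lemma bd_mem_Z {n : ℕ} {U : Set V} {c : Ch V} (h : c ∈ C (n + 1) U) : bd c ∈ Z n U :=
  mem_Z.2 ⟨bd_C h, bd_bd c⟩

lemma B_le_Z {n : ℕ} {U : Set V} : B n U ≤ Z n U := by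
  intro c hc
  obtain ⟨e, he, rfl⟩ := mem_B.1 hc
  exact bd_mem_Z he

lemma Z_mono {n : ℕ} {U U' : Set V} (h : U ⊆ U') : Z n U ≤ Z n U' :=
  inf_le_inf_right _ (C_mono h)

lemma B_mono {n : ℕ} {U U' : Set V} (h : U ⊆ U') : B n U ≤ B n U' :=
  Submodule.map_mono (C_mono h)

noncomputable def cls (n : ℕ) (U : Set V) : Z n U →ₗ[ℚ] H n U :=
  Submodule.mkQ _

lemma cls_surj (n : ℕ) (U : Set V) : Function.Surjective (cls n U) :=
  Submodule.mkQ_surjective _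

lemma cls_eq_zero {n : ℕ} {U : Set V} (z : Z n U) : cls n U z = 0 ↔ (z : Ch V) ∈ B n U := by
  rw [cls, Submodule.mkQ_apply, Submodule.Quotient.mk_eq_zero]
  rfl

lemma beta_eq_zero {n : ℕ} {U : Set V} : beta n U = 0 ↔ Acyc n U := by
  rw [beta, rank_zero_iff]
  constructor
  · intro h z hz
    exact (cls_eq_zero ⟨z, hz⟩).1 (Subsingleton.elim _ _)
  · intro h
    refine ⟨fun a b => ?_⟩
    have : ∀ a : H n U, a = 0 := by
      intro a
      obtain ⟨z, rfl⟩ := cls_surj n U a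
      exact (cls_eq_zero z).2 (h z.2)
    rw [this a, this b]

noncomputable def incl (n : ℕ) {U U' : Set V} (h : U ⊆ U') : H n U →ₗ[ℚ] H n U' :=
  Submodule.mapQ _ _ (Submodule.inclusion (Z_mono h)) (by
    intro z hz
    exact B_mono (n := n) h (show (z : Ch V) ∈ B n U from hz))

lemma incl_cls {n : ℕ} {U U' : Set V} (h : U ⊆ U') (z : Z n U) :
    incl n h (cls n U z) = cls n U' ⟨z, Z_mono h z.2⟩ := rfl

/-- The map in the Mayer-Vietoris sequence. -/
noncomputable def mvI (n : ℕ) (U1 U2 : Set V) : H n (U1 ∩ U2) →ₗ[ℚ] H n U1 × H n U2 :=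
  (incl n inter_subset_left).prod (incl n inter_subset_right)

lemma mvI_cls_eq_zero {n : ℕ} {U1 U2 : Set V} (z : Z n (U1 ∩ U2)) :
    mvI n U1 U2 (cls n _ z) = 0 ↔ (z : Ch V) ∈ B n U1 ∧ (z : Ch V) ∈ B n U2 := by
  change (incl n _ (cls n _ z), incl n _ (cls n _ z)) = 0 ↔ _
  rw [Prod.mk_eq_zero, incl_cls, incl_cls, cls_eq_zero, cls_eq_zero]

lemma mem_C_inter {n : ℕ} {U1 U2 : Set V} {c : Ch V} (h1 : c ∈ C n U1) (h2 : c ∈ C n U2) :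
    c ∈ C n (U1 ∩ U2) := by
  rw [C_inter]; exact ⟨h1, h2⟩

lemma mem_Cu {n : ℕ} {U : Set V} {c : Ch V} (h : c ∈ C n U) : c ∈ C n univ :=
  C_mono (subset_univ _) h

/-- Key exactness step. -/
lemma mv_key {q : ℕ} {U1 U2 : Set V} (h1 : IsOpen U1) (h2 : IsOpen U2) {a b : Ch V}
    (ha : a ∈ C (q + 1) U1) (hb : b ∈ C (q + 1) U2) (hab : bd a = bd b)
    (h : a - b ∈ B (q + 1) (U1 ∪ U2)) : bd a ∈ B q (U1 ∩ U2) := by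
  obtain ⟨e, he, hee⟩ := mem_B.1 h
  obtain ⟨s, D, hs, e1, he1, e2, he2, hse⟩ := exists_sub h1 h2 e he
  have h3 : s (q + 1) a - s (q + 1) b = bd e1 + bd e2 := by
    rw [← map_sub, ← hee, ← hs.bd_s _ e (mem_Cu he), hse, map_add]
  set c := s (q + 1) a - bd e1 with hc
  have hc' : c = s (q + 1) b + bd e2 := by
    rw [hc, sub_eq_iff_eq_add]
    rw [sub_eq_iff_eq_add] at h3
    rw [h3]; abel
  have hcm : c ∈ C (q + 1) (U1 ∩ U2) := by
    refine mem_C_inter ?_ ?_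
    · exact Submodule.sub_mem _ (hs.s_mem _ _ _ ha) (bd_C he1)
    · rw [hc']
      exact Submodule.add_mem _ (hs.s_mem _ _ _ hb) (bd_C he2)
  have hda : bd a ∈ C q (U1 ∩ U2) := mem_C_inter (bd_C ha) (hab ▸ bd_C hb)
  refine mem_B.2 ⟨c + D q (bd a), Submodule.add_mem _ hcm (hs.D_mem _ _ _ hda), ?_⟩
  rw [map_add, hs.bd_D q (bd a) (mem_Cu hda) (bd_bd a), hc, map_sub, bd_bd,
    hs.bd_s q a (mem_Cu ha)]
  abel

lemma mv_bound {q : ℕ} {U1 U2 : Set V} (h1 : IsOpen U1) (h2 : IsOpen U2)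
    (hA : Acyc (q + 1) (U1 ∪ U2)) {z : Ch V} (hz1 : z ∈ B q U1) (hz2 : z ∈ B q U2) :
    z ∈ B q (U1 ∩ U2) := by
  obtain ⟨a, ha, rfl⟩ := mem_B.1 hz1
  obtain ⟨b, hb, hab⟩ := mem_B.1 hz2
  refine mv_key h1 h2 ha hb hab.symm (hA (mem_Z.2 ⟨?_, ?_⟩))
  · exact Submodule.sub_mem _ (C_mono subset_union_left ha) (C_mono subset_union_right hb)
  · rw [map_sub, hab, sub_self]

lemma acyc_inter {q : ℕ} {U1 U2 : Set V} (h1 : IsOpen U1) (h2 : IsOpen U2)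
    (hA1 : Acyc q U1) (hA2 : Acyc q U2) (hA : Acyc (q + 1) (U1 ∪ U2)) : Acyc q (U1 ∩ U2) :=
  fun _ hz => mv_bound h1 h2 hA (hA1 (Z_mono inter_subset_left hz))
    (hA2 (Z_mono inter_subset_right hz))

/-- every cycle in the union is, up to boundary, of the form `a - b`. -/
lemma mv_decomp {q : ℕ} {U1 U2 : Set V} (h1 : IsOpen U1) (h2 : IsOpen U2) {z : Ch V}
    (hz : z ∈ Z (q + 1) (U1 ∪ U2)) : ∃ a ∈ C (q + 1) U1, ∃ b ∈ C (q + 1) U2,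
      bd a = bd b ∧ z - (a - b) ∈ B (q + 1) (U1 ∪ U2) := by
  obtain ⟨hzC, hz0⟩ := mem_Z.1 hz
  obtain ⟨s, D, hs, a, ha, b, hb, hse⟩ := exists_sub h1 h2 z hzC
  have hD := hs.bd_D _ z (mem_Cu hzC) hz0
  refine ⟨a, ha, -b, Submodule.neg_mem _ hb, ?_, ?_⟩
  · have := congrArg bd hD
    rw [bd_bd, map_sub, hz0, hse, map_add, zero_sub, zero_eq_neg] at this
    rw [map_neg]
    exact eq_neg_of_add_eq_zero_left this
  · refine mem_B.2 ⟨D _ z, hs.D_mem _ _ _ hzC, ?_⟩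
    rw [hD, hse]; abel

lemma acyc_union {q : ℕ} {U1 U2 : Set V} (h1 : IsOpen U1) (h2 : IsOpen U2)
    (hA1 : Acyc (q + 1) U1) (hA2 : Acyc (q + 1) U2) (hA : Acyc q (U1 ∩ U2)) :
    Acyc (q + 1) (U1 ∪ U2) := by
  intro z hz
  obtain ⟨a, ha, b, hb, hab, h⟩ := mv_decomp h1 h2 hz
  have hda : bd a ∈ Z q (U1 ∩ U2) :=
    mem_Z.2 ⟨mem_C_inter (bd_C ha) (hab ▸ bd_C hb), bd_bd a⟩
  obtain ⟨c, hc, hca⟩ := mem_B.1 (hA hda)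
  have e1 : a - c ∈ B (q + 1) U1 := hA1 (mem_Z.2
    ⟨Submodule.sub_mem _ ha (C_mono inter_subset_left hc), by rw [map_sub, hca, sub_self]⟩)
  have e2 : b - c ∈ B (q + 1) U2 := hA2 (mem_Z.2
    ⟨Submodule.sub_mem _ hb (C_mono inter_subset_right hc), by
      rw [map_sub, hca, hab, sub_self]⟩)
  have : z = (z - (a - b)) + ((a - c) - (b - c)) := by abel
  rw [this]
  exact Submodule.add_mem _ h (Submodule.sub_mem _ (B_mono subset_union_left e1)
    (B_mono subset_union_right e2))

lemma mvI_surj {q : ℕ} {U1 U2 : Set V} (h1 : IsOpen U1) (h2 : IsOpen U2)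
    (hA : Acyc q (U1 ∪ U2)) : Function.Surjective (mvI q U1 U2) := by
  rintro ⟨x1, x2⟩
  obtain ⟨⟨z1, hz1⟩, rfl⟩ := cls_surj _ _ x1
  obtain ⟨⟨z2, hz2⟩, rfl⟩ := cls_surj _ _ x2
  have hd : z1 - z2 ∈ Z q (U1 ∪ U2) := Submodule.sub_mem _ (Z_mono subset_union_left hz1)
    (Z_mono subset_union_right hz2)
  obtain ⟨e, he, hee⟩ := mem_B.1 (hA hd)
  obtain ⟨s, D, hs, e1, he1, e2, he2, hse⟩ := exists_sub h1 h2 e he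
  obtain ⟨hz1, hz1'⟩ := mem_Z.1 hz1
  obtain ⟨hz2, hz2'⟩ := mem_Z.1 hz2
  have hD1 := hs.bd_D _ z1 (mem_Cu hz1) hz1'
  have hD2 := hs.bd_D _ z2 (mem_Cu hz2) hz2'
  have h3 : s q z1 - s q z2 = bd e1 + bd e2 := by
    rw [← map_sub, ← hee, ← hs.bd_s _ e (mem_Cu he), hse, map_add]
  have hc' : s q z1 - bd e1 = s q z2 + bd e2 := by
    rw [sub_eq_iff_eq_add]
    rw [sub_eq_iff_eq_add] at h3
    rw [h3]; abel
  have hzz : s q z1 - bd e1 ∈ Z q (U1 ∩ U2) := by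
    refine mem_Z.2 ⟨mem_C_inter ?_ ?_, ?_⟩
    · exact Submodule.sub_mem _ (hs.s_mem _ _ _ hz1) (bd_C he1)
    · rw [hc']; exact Submodule.add_mem _ (hs.s_mem _ _ _ hz2) (bd_C he2)
    · have := congrArg bd hD1
      rw [bd_bd, map_sub, hz1', zero_sub, zero_eq_neg] at this
      rw [map_sub, this, bd_bd, sub_zero]
  refine ⟨cls _ _ ⟨_, hzz⟩, ?_⟩
  change (incl q _ (cls q _ _), incl q _ (cls q _ _)) = _
  rw [incl_cls, incl_cls]
  refine Prod.ext ?_ ?_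
  · refine sub_eq_zero.1 ?_
    rw [← map_sub, cls_eq_zero]
    refine mem_B.2 ⟨-(D q z1) - e1, Submodule.sub_mem _ (Submodule.neg_mem _
      (hs.D_mem _ _ _ hz1)) he1, ?_⟩
    simp only [map_sub, map_neg, hD1, Submodule.coe_sub]; abel
  · refine sub_eq_zero.1 ?_
    rw [← map_sub, cls_eq_zero]
    refine mem_B.2 ⟨-(D q z2) + e2, Submodule.add_mem _ (Submodule.neg_mem _
      (hs.D_mem _ _ _ hz2)) he2, ?_⟩
    simp only [map_add, map_neg, hD2, Submodule.coe_sub, hc']; abel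

lemma rank_ker_mvI {q : ℕ} {U1 U2 : Set V} (h1 : IsOpen U1) (h2 : IsOpen U2)
    (hA1 : Acyc (q + 1) U1) (hA2 : Acyc (q + 1) U2) :
    Module.rank ℚ (LinearMap.ker (mvI q U1 U2)) = beta (q + 1) (U1 ∪ U2) := by
  let P : Submodule ℚ (Ch V × Ch V) :=
    ((C (q + 1) U1).prod (C (q + 1) U2)) ⊓
      LinearMap.ker (bd ∘ₗ LinearMap.fst ℚ _ _ - bd ∘ₗ LinearMap.snd ℚ _ _)
  have hP : ∀ p : P, p.1.1 ∈ C (q + 1) U1 ∧ p.1.2 ∈ C (q + 1) U2 ∧ bd p.1.1 = bd p.1.2 := by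
    rintro ⟨p, ⟨hp1, hp2⟩, hp3⟩
    refine ⟨hp1, hp2, ?_⟩
    simpa [sub_eq_zero] using hp3
  let α : P →ₗ[ℚ] H q (U1 ∩ U2) := cls _ _ ∘ₗ
    LinearMap.codRestrict (Z q (U1 ∩ U2)) (bd ∘ₗ LinearMap.fst ℚ _ _ ∘ₗ P.subtype) (by
      intro p
      obtain ⟨ha, hb, hab⟩ := hP p
      exact mem_Z.2 ⟨mem_C_inter (bd_C ha) (by
        have := bd_C hb
        rw [← hab] at this; exact this), bd_bd _⟩)
  let γ : P →ₗ[ℚ] H (q + 1) (U1 ∪ U2) := cls _ _ ∘ₗ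
    LinearMap.codRestrict (Z (q + 1) (U1 ∪ U2))
      ((LinearMap.fst ℚ _ _ - LinearMap.snd ℚ _ _) ∘ₗ P.subtype) (by
      intro p
      obtain ⟨ha, hb, hab⟩ := hP p
      refine mem_Z.2 ⟨Submodule.sub_mem _ (C_mono subset_union_left ha)
        (C_mono subset_union_right hb), ?_⟩
      simp [hab])
  have hα : ∀ p : P, α p = 0 ↔ bd p.1.1 ∈ B q (U1 ∩ U2) := fun p => cls_eq_zero _
  have hγ : ∀ p : P, γ p = 0 ↔ p.1.1 - p.1.2 ∈ B (q + 1) (U1 ∪ U2) := fun p => cls_eq_zero _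
  have hker : LinearMap.ker α = LinearMap.ker γ := by
    ext p
    obtain ⟨ha, hb, hab⟩ := hP p
    rw [LinearMap.mem_ker, LinearMap.mem_ker, hα, hγ]
    constructor
    · intro h
      obtain ⟨c, hc, hca⟩ := mem_B.1 h
      have e1 : p.1.1 - c ∈ B (q + 1) U1 := hA1 (mem_Z.2
        ⟨Submodule.sub_mem _ ha (C_mono inter_subset_left hc), by rw [map_sub, hca, sub_self]⟩)
      have e2 : p.1.2 - c ∈ B (q + 1) U2 := hA2 (mem_Z.2
        ⟨Submodule.sub_mem _ hb (C_mono inter_subset_right hc), by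
          rw [map_sub, hca, hab, sub_self]⟩)
      have : p.1.1 - p.1.2 = ((p.1.1 - c) - (p.1.2 - c)) := by abel
      rw [this]
      exact Submodule.sub_mem _ (B_mono subset_union_left e1) (B_mono subset_union_right e2)
    · exact mv_key h1 h2 ha hb hab
  have hrange : LinearMap.range α = LinearMap.ker (mvI q U1 U2) := by
    ext x
    constructor
    · rintro ⟨p, rfl⟩
      obtain ⟨ha, hb, hab⟩ := hP p
      refine (mvI_cls_eq_zero _).2 ⟨mem_B.2 ⟨_, ha, rfl⟩, mem_B.2 ⟨_, hb, hab.symm⟩⟩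
    · intro hx
      obtain ⟨z, rfl⟩ := cls_surj _ _ x
      obtain ⟨hz1, hz2⟩ := (mvI_cls_eq_zero _).1 hx
      obtain ⟨a, ha, haz⟩ := mem_B.1 hz1
      obtain ⟨b, hb, hbz⟩ := mem_B.1 hz2
      refine ⟨⟨(a, b), ⟨⟨ha, hb⟩, by simp [haz, hbz]⟩⟩, ?_⟩
      change cls _ _ _ = _
      congr 1
      exact Subtype.ext haz
  have hsurj : Function.Surjective γ := by
    intro x
    obtain ⟨z, rfl⟩ := cls_surj _ _ x
    obtain ⟨a, ha, b, hb, hab, h⟩ := mv_decomp h1 h2 z.2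
    refine ⟨⟨(a, b), ⟨⟨ha, hb⟩, by simp [hab]⟩⟩, ?_⟩
    refine (sub_eq_zero.1 ?_).symm
    change cls _ _ _ - cls _ _ _ = 0
    rw [← map_sub, cls_eq_zero]
    exact h
  rw [← hrange, beta, ← (α.quotKerEquivRange).rank_eq,
    (Submodule.quotEquivOfEq _ _ hker).rank_eq,
    (γ.quotKerEquivOfSurjective hsurj).rank_eq]

lemma beta_inter_add {q : ℕ} {U1 U2 : Set V} (h1 : IsOpen U1) (h2 : IsOpen U2)
    (hA1 : Acyc (q + 1) U1) (hA2 : Acyc (q + 1) U2) (hA : Acyc q (U1 ∪ U2)) :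
    beta q (U1 ∩ U2) = beta q U1 + beta q U2 + beta (q + 1) (U1 ∪ U2) := by
  have := LinearMap.rank_eq_of_surjective (mvI_surj h1 h2 hA)
  rw [rank_ker_mvI h1 h2 hA1 hA2, rank_prod'] at this
  exact this

lemma beta_inter_ge {q : ℕ} {U1 U2 : Set V} (h1 : IsOpen U1) (h2 : IsOpen U2)
    (hA : Acyc q (U1 ∪ U2)) : beta q U1 + beta q U2 ≤ beta q (U1 ∩ U2) := by
  have := LinearMap.rank_le_of_surjective _ (mvI_surj h1 h2 hA)
  rw [rank_prod'] at this
  exact this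

lemma beta_inter_eq {q : ℕ} {U1 U2 : Set V} (h1 : IsOpen U1) (h2 : IsOpen U2)
    (hA1 : Acyc q U1) (hA2 : Acyc q U2)
    (hB1 : Acyc (q + 1) U1) (hB2 : Acyc (q + 1) U2) :
    beta q (U1 ∩ U2) = beta (q + 1) (U1 ∪ U2) := by
  rw [← rank_ker_mvI h1 h2 hB1 hB2]
  have : LinearMap.ker (mvI q U1 U2) = ⊤ := by
    rw [eq_top_iff]
    intro x _
    obtain ⟨z, rfl⟩ := cls_surj _ _ x
    exact (mvI_cls_eq_zero z).2 ⟨hA1 (Z_mono inter_subset_left z.2),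
      hA2 (Z_mono inter_subset_right z.2)⟩
  rw [this, rank_top, beta]

lemma cone_C {n : ℕ} {v : V} {U : Set V} (hv : v ∈ U) (hU : StarConvex ℝ v U) {c : Ch V}
    (hc : c ∈ C n U) : cone v c ∈ C (n + 1) U := by
  refine mem_of_supported ?_ hc
  rintro l ⟨h1, h2⟩
  rw [cone_single]
  refine single_mem ⟨by simp [h1], ?_⟩
  have he : {x | x ∈ v :: l} = insert v {x | x ∈ l} := by ext; simp
  rw [hull, he]
  rcases Set.eq_empty_or_nonempty {x | x ∈ l} with h | h
  · rw [h]; simpa using hv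
  · rw [convexHull_insert h]
    intro x hx
    rw [convexJoin_singleton_left, mem_iUnion₂] at hx
    obtain ⟨y, hy, hx⟩ := hx
    exact hU.segment_subset (h2 hy) hx

lemma acyc_of_star {n : ℕ} {v : V} {U : Set V} (hv : v ∈ U) (hU : StarConvex ℝ v U) :
    Acyc n U := by
  intro z hz
  obtain ⟨hz, hz0⟩ := mem_Z.1 hz
  exact mem_B.2 ⟨cone v z, cone_C hv hU hz, by rw [bd_cone, hz0]; simp⟩

lemma acyc_empty (n : ℕ) : Acyc (n + 1) (∅ : Set V) := by
  intro z hz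
  obtain ⟨hz, hz0⟩ := mem_Z.1 hz
  have : z = 0 := by
    have h : z ∈ Finsupp.supported ℚ ℚ (∅ : Set (List V)) := by
      refine Finsupp.supported_mono ?_ hz
      rintro l ⟨h1, h2⟩
      cases l with
      | nil => simp at h1
      | cons v l => exact (h2 (subset_hull (x := v) (by simp))).elim
    simpa using h
  rw [this]; exact Submodule.zero_mem _

lemma acyc_zero {U : Set V} (hU : U.Nonempty) : Acyc 0 U := by
  intro z hz
  obtain ⟨hz, hz0⟩ := mem_Z.1 hz
  obtain ⟨v, hv⟩ := hU
  refine mem_B.2 ⟨cone v z, ?_, by rw [bd_cone, hz0]; simp⟩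
  refine mem_of_supported ?_ hz
  rintro l ⟨h1, h2⟩
  rw [List.length_eq_zero_iff] at h1
  subst h1
  rw [cone_single]
  refine single_mem ⟨by simp, ?_⟩
  simp [hull, hv]

lemma C_iUnion {n : ℕ} {U : ℕ → Set V} (ho : ∀ j, IsOpen (U j)) (hm : Monotone U) {c : Ch V}
    (hc : c ∈ C n (⋃ j, U j)) : ∃ j, c ∈ C n (U j) := by
  have : ∀ l : List V, ∃ j, hull l ⊆ ⋃ j, U j → hull l ⊆ U j := by
    intro l
    by_cases h : hull l ⊆ ⋃ j, U j
    · obtain ⟨j, hj⟩ := (isCompact_hull l).elim_directed_cover U ho h hm.directed_le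
      exact ⟨j, fun _ => hj⟩
    · exact ⟨0, fun h' => (h h').elim⟩
  choose J hJ using this
  refine ⟨c.support.sup J, ?_⟩
  intro l hl
  obtain ⟨h1, h2⟩ := hc hl
  exact ⟨h1, (hJ l h2).trans (hm (Finset.le_sup hl))⟩

end Homology
end VennAux

namespace VennAux
section Components

variable {V : Type} [NormedAddCommGroup V] [NormedSpace ℝ V]

lemma bdL_one (x : V) : bdL [x] = Finsupp.single [] 1 := by simp [bdL]

lemma bdL_two (x y : V) : bdL [x, y] = Finsupp.single [y] 1 - Finsupp.single [x] 1 := by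
  simp [bdL, cone_single]

lemma pt_mem_C {U : Set V} {x : V} (hx : x ∈ U) : (Finsupp.single [x] 1 : Ch V) ∈ C 1 U :=
  single_mem ⟨rfl, by simpa [hull] using hx⟩

lemma conn_bound {U W : Set V} (hWo : IsOpen W) (hWU : W ⊆ U) (hW : IsPreconnected W) {x y : V}
    (hx : x ∈ W) (hy : y ∈ W) :
    (Finsupp.single [x] 1 - Finsupp.single [y] 1 : Ch V) ∈ B 1 U := by
  refine hW.induction₂ (fun x y => (Finsupp.single [x] 1 - Finsupp.single [y] 1 : Ch V) ∈ B 1 U)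
    ?_ ?_ ?_ hx hy
  · intro x hx
    obtain ⟨ε, hε, hb⟩ := Metric.isOpen_iff.1 hWo x hx
    refine mem_nhdsWithin_of_mem_nhds ?_
    filter_upwards [ball_mem_nhds x hε] with y hy
    refine mem_B.2 ⟨Finsupp.single [y, x] 1, single_mem ⟨rfl, ?_⟩, ?_⟩
    · refine (convexHull_min ?_ (convex_ball x ε)).trans (hb.trans hWU)
      intro z hz
      have : z = y ∨ z = x := by simpa using hz
      rcases this with h | h
      · rwa [h]
      · rw [h]; exact mem_ball_self hε
    · rw [bd_single, bdL_two]
  · intro x y z _ _ _ h1 h2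
    have := Submodule.add_mem _ h1 h2
    simpa using this
  · intro x y _ _ h
    have := Submodule.neg_mem _ h
    simpa using this

open Classical in
/-- component-counting map -/
noncomputable def psi {ι : Type} (W : ι → Set V) : Ch V →ₗ[ℚ] (ι → ℚ) :=
  Finsupp.linearCombination ℚ (fun (l : List V) (i : ι) => if ∃ x, l = [x] ∧ x ∈ W i then (1:ℚ) else 0)

open Classical in
lemma psi_pt {ι : Type} (W : ι → Set V) (hd : ∀ i j, i ≠ j → Disjoint (W i) (W j)) {x : V} {i : ι}
    (hx : x ∈ W i) : psi W (Finsupp.single [x] 1) = Pi.single i 1 := by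
  ext j
  simp only [psi, Finsupp.linearCombination_single, one_smul]
  by_cases h : j = i
  · subst h; simp [hx]
  · rw [Pi.single_eq_of_ne h]
    have : x ∉ W j := fun hj => (hd j i h).le_bot ⟨hj, hx⟩
    simp [this]

lemma beta_one {ι : Type} [Fintype ι] [Nonempty ι] (W : ι → Set V) (ho : ∀ i, IsOpen (W i))
    (hc : ∀ i, IsPreconnected (W i)) (hne : ∀ i, (W i).Nonempty)
    (hd : ∀ i j, i ≠ j → Disjoint (W i) (W j)) :
    beta 1 (⋃ i, W i) + 1 = Fintype.card ι := by
  classical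
  set U := ⋃ i, W i with hU
  choose w hw using hne
  have hWU : ∀ i, W i ⊆ U := fun i => subset_iUnion W i
  let sm : (ι → ℚ) →ₗ[ℚ] ℚ := ∑ i, LinearMap.proj i
  have hsm : ∀ f, sm f = ∑ i, f i := by intro f; simp [sm]
  -- one-point lists
  have hgen : ∀ l : List V, l.length = 1 ∧ hull l ⊆ U → ∃ x i, l = [x] ∧ x ∈ W i := by
    rintro l ⟨h1, h2⟩
    obtain ⟨x, rfl⟩ := List.length_eq_one_iff.1 h1
    obtain ⟨i, hi⟩ := mem_iUnion.1 (h2 (subset_hull (x := x) (by simp)))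
    exact ⟨x, i, rfl, hi⟩
  have hbdry : ∀ c ∈ C 2 U, psi W (bd c) = 0 := by
    intro c hcc
    have hm : Submodule.span ℚ ((fun l : List V => (Finsupp.single l 1 : Ch V)) ''
      {l | l.length = 2 ∧ hull l ⊆ U}) ≤ LinearMap.ker (psi W ∘ₗ bd) := by
      rw [Submodule.span_le]
      rintro _ ⟨l, ⟨h1, h2⟩, rfl⟩
      obtain ⟨x, y, rfl⟩ := List.length_eq_two.1 h1
      obtain ⟨i, hi⟩ := mem_iUnion.1 (h2 (subset_hull (x := x) (by simp)))
      have hsub : hull [x, y] ⊆ W i := by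
        refine (convex_hull [x, y]).isPreconnected.subset_left_of_subset_union
          (ho i) (isOpen_iUnion fun j : {j // j ≠ i} => ho j) ?_ ?_
          ⟨x, subset_hull (by simp), hi⟩
        · rw [disjoint_iUnion_right]
          exact fun j => hd i j j.2.symm
        · intro z hz
          obtain ⟨j, hj⟩ := mem_iUnion.1 (h2 hz)
          by_cases h : j = i
          · left; rwa [← h]
          · right; exact mem_iUnion.2 ⟨⟨j, h⟩, hj⟩
      have hy : y ∈ W i := hsub (subset_hull (by simp))
      change psi W (bd _) = 0
      rw [bd_single, bdL_two, map_sub, psi_pt W hd hi, psi_pt W hd hy, sub_self]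
    rw [C, Finsupp.supported_eq_span_single] at hcc
    exact hm hcc
  have haug : ∀ c ∈ C 1 U, bd c = (sm (psi W c)) • (Finsupp.single [] 1 : Ch V) := by
    intro c hcc
    have := eq_of_supported (f := bd)
      (g := (LinearMap.toSpanSingleton ℚ (Ch V) (Finsupp.single [] 1)) ∘ₗ sm ∘ₗ psi W) ?_ hcc
    · simpa using this
    intro l hl
    obtain ⟨x, i, rfl, hx⟩ := hgen l hl
    simp only [LinearMap.comp_apply, psi_pt W hd hx, bd_single, bdL_one, hsm]
    simp
  have hred : ∀ c ∈ C 1 U, c - ∑ i, psi W c i • (Finsupp.single [w i] 1 : Ch V) ∈ B 1 U := by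
    intro c hcc
    have := mem_of_supported (f := LinearMap.id - ∑ i,
      (LinearMap.toSpanSingleton ℚ (Ch V) (Finsupp.single [w i] 1)) ∘ₗ
        LinearMap.proj i ∘ₗ psi W) (N := B 1 U) ?_ hcc
    · simpa using this
    intro l hl
    obtain ⟨x, i, rfl, hx⟩ := hgen l hl
    have e := conn_bound (ho i) (hWU i) (hc i) hx (hw i)
    simp only [LinearMap.sub_apply, LinearMap.id_apply, LinearMap.sum_apply,
      LinearMap.comp_apply, psi_pt W hd hx]
    convert e using 2
    rw [Finset.sum_eq_single i]
    · simp
    · intro j _ hj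
      simp [Pi.single_eq_of_ne hj]
    · simp
  let Φ : Z 1 U →ₗ[ℚ] (ι → ℚ) := psi W ∘ₗ (Z 1 U).subtype
  have hker : (B 1 U).submoduleOf (Z 1 U) = LinearMap.ker Φ := by
    ext z
    rw [LinearMap.mem_ker]
    change (z : Ch V) ∈ B 1 U ↔ psi W (z : Ch V) = 0
    constructor
    · intro h
      obtain ⟨e, he, hez⟩ := mem_B.1 h
      rw [← hez]; exact hbdry e he
    · intro h
      have := hred z (mem_Z.1 z.2).1
      simpa [h] using this
  have hrange : LinearMap.range Φ = LinearMap.ker sm := by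
    ext f
    constructor
    · rintro ⟨z, rfl⟩
      obtain ⟨h1, h2⟩ := mem_Z.1 z.2
      have := haug z h1
      rw [h2] at this
      rw [LinearMap.mem_ker]
      have h3 : (Finsupp.single [] 1 : Ch V) ≠ 0 := by simp
      exact (smul_eq_zero.1 this.symm).resolve_right h3
    · intro hf
      rw [LinearMap.mem_ker] at hf
      have hcC : ∑ i, f i • (Finsupp.single [w i] 1 : Ch V) ∈ C 1 U :=
        Submodule.sum_mem _ fun i _ => Submodule.smul_mem _ _ (pt_mem_C (hWU i (hw i)))
      have hpsi : psi W (∑ i, f i • (Finsupp.single [w i] 1 : Ch V)) = f := by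
        rw [map_sum]
        simp_rw [map_smul]
        have : ∀ i, psi W (Finsupp.single [w i] 1 : Ch V) = Pi.single i 1 :=
          fun i => psi_pt W hd (hw i)
        simp_rw [this]
        ext j
        simp [Finset.sum_apply, Pi.single_apply]
      refine ⟨⟨_, mem_Z.2 ⟨hcC, ?_⟩⟩, hpsi⟩
      rw [haug _ hcC, hpsi, hf, zero_smul]
  have hrk : beta 1 U = Module.rank ℚ (LinearMap.ker sm) := by
    rw [beta, ← hrange, ← Φ.quotKerEquivRange.rank_eq]
    exact (Submodule.quotEquivOfEq _ _ hker).rank_eq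
  have hsurj : Function.Surjective sm := by
    intro r
    obtain ⟨i⟩ := ‹Nonempty ι›
    exact ⟨Pi.single i r, by rw [hsm]; simp⟩
  have := LinearMap.rank_eq_of_surjective hsurj
  rw [rank_fun', Module.rank_self] at this
  rw [hrk, this, add_comm]

end Components
end VennAux

namespace VennAux
section Cone

variable {E : Type} [NormedAddCommGroup E] [NormedSpace ℝ E]

/-- complement of the (closed) cone over `K × {1}` -/
def Uc (K : Set E) : Set (E × ℝ) := {p | p ≠ 0 ∧ ¬(0 < p.2 ∧ p.2⁻¹ • p.1 ∈ K)}

lemma mem_Uc {K : Set E} {p : E × ℝ} : p ∈ Uc K ↔ p ≠ 0 ∧ (0 < p.2 → p.2⁻¹ • p.1 ∉ K) := by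
  simp [Uc]

lemma Uc_union (A B : Set E) : Uc (A ∪ B) = Uc A ∩ Uc B := by
  ext p; simp only [mem_Uc, mem_inter_iff, mem_union]; tauto

lemma Uc_inter (A B : Set E) : Uc (A ∩ B) = Uc A ∪ Uc B := by
  ext p; simp only [mem_Uc, mem_inter_iff, mem_union]; tauto

lemma Uc_anti {A B : Set E} (h : A ⊆ B) : Uc B ⊆ Uc A := by
  intro p hp
  rw [mem_Uc] at hp ⊢
  exact ⟨hp.1, fun h0 h1 => hp.2 h0 (h h1)⟩

lemma Uc_iInter (K : ℕ → Set E) : Uc (⋂ j, K j) = ⋃ j, Uc (K j) := by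
  ext p; simp only [mem_Uc, mem_iInter, mem_iUnion]
  constructor
  · rintro ⟨h0, h1⟩
    by_cases hp : 0 < p.2
    · obtain ⟨j, hj⟩ := not_forall.1 (h1 hp)
      exact ⟨j, h0, fun _ => hj⟩
    · exact ⟨0, h0, fun h => absurd h hp⟩
  · rintro ⟨j, h0, h1⟩
    exact ⟨h0, fun hp h => h1 hp (h j)⟩

lemma neg_one_mem_Uc (K : Set E) : ((0, -1) : E × ℝ) ∈ Uc K := by
  rw [mem_Uc]
  refine ⟨by simp, fun h => ?_⟩
  norm_num at h

lemma isOpen_Uc {K : Set E} (hK : IsCompact K) : IsOpen (Uc K) := by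
  obtain ⟨R, hR⟩ := hK.isBounded.subset_closedBall (0 : E)
  have : Uc K = ({p | p.2 < 0} ∪ {p | R * p.2 < ‖p.1‖ ∧ R * (-p.2) < ‖p.1‖ ∧ p ≠ 0}) ∪
      ({p | 0 < p.2} ∩ (fun p : E × ℝ => p.2⁻¹ • p.1) ⁻¹' Kᶜ) := by
    ext p
    simp only [mem_Uc, mem_union, mem_inter_iff, mem_ofPred_eq, mem_preimage, mem_compl_iff]
    constructor
    · rintro ⟨h0, h1⟩
      rcases lt_trichotomy p.2 0 with h | h | h
      · exact Or.inl (Or.inl h)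
      · left; right
        have : p.1 ≠ 0 := fun h' => h0 (Prod.ext h' h)
        have := norm_pos_iff.2 this
        simp [h, this, h0]
      · exact Or.inr ⟨h, h1 h⟩
    · rintro ((h | ⟨h, h', h0⟩) | ⟨h, h'⟩)
      · exact ⟨fun h0 => by simp [h0] at h, fun h' => absurd h' (by linarith)⟩
      · refine ⟨h0, fun hp hK => ?_⟩
        have := hR hK
        rw [mem_closedBall_zero_iff, norm_smul, norm_inv, Real.norm_of_nonneg hp.le,
          inv_mul_le_iff₀ hp] at this
        linarith
      · exact ⟨fun h0 => by simp [h0] at h, fun _ => h'⟩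
  rw [this]
  refine IsOpen.union (IsOpen.union ?_ ?_) ?_
  · exact isOpen_lt continuous_snd continuous_const
  · refine IsOpen.inter ?_ (IsOpen.inter ?_ ?_)
    · exact isOpen_lt (continuous_const.mul continuous_snd) continuous_fst.norm
    · exact isOpen_lt (continuous_const.mul continuous_snd.neg) continuous_fst.norm
    · exact isOpen_ne
  · refine ContinuousOn.isOpen_inter_preimage ?_ (isOpen_lt continuous_const continuous_snd)
      hK.isClosed.isOpen_compl
    refine ContinuousOn.smul (ContinuousOn.inv₀ (by fun_prop) ?_) (by fun_prop)
    intro x hx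
    exact ne_of_gt hx

lemma acyc_pt (x : E) (n : ℕ) : Acyc n (Uc {x}) := by
  refine acyc_of_star (v := (-x, -1)) ?_ ?_
  · rw [mem_Uc]
    refine ⟨by simp, fun h => ?_⟩
    norm_num at h
  · intro p hp a b ha hb hab
    rw [mem_Uc] at hp ⊢
    rcases hb.eq_or_lt with rfl | hb
    · have : a = 1 := by linarith
      subst this
      refine ⟨by simp, fun h => ?_⟩
      norm_num at h
    constructor
    · intro h
      have h1 : a • (-x) + b • p.1 = 0 := congrArg Prod.fst h
      have h2 : a * (-1) + b * p.2 = 0 := congrArg Prod.snd h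
      have h3 : p.1 = p.2 • x := by
        have : b • p.1 = b • p.2 • x := by
          rw [smul_smul, show b * p.2 = a by linarith]
          rw [smul_neg] at h1
          exact (neg_add_eq_zero.1 h1).symm
        exact smul_right_injective _ hb.ne' this
      have h4 : 0 ≤ p.2 := by
        by_contra hc
        nlinarith
      rcases h4.eq_or_lt with h4 | h4
      · exact hp.1 (Prod.ext (by rw [h3, ← h4]; simp) h4.symm)
      · exact hp.2 h4 (by rw [h3, smul_smul, inv_mul_cancel₀ h4.ne']; simp)
    · intro h0 h
      have h0' : 0 < a * (-1) + b * p.2 := h0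
      have h2 : (a * (-1) + b * p.2)⁻¹ • (a • (-x) + b • p.1) = x := h
      have h4 : 0 < p.2 := by
        by_contra hc
        nlinarith
      rw [inv_smul_eq_iff₀ h0'.ne'] at h2
      have h3 : p.1 = p.2 • x := by
        have : b • p.1 = b • p.2 • x := by
          rw [smul_smul]
          have h5 : b • p.1 = (a * (-1) + b * p.2) • x + a • x := by
            rw [← h2]; module
          rw [h5]; module
        exact smul_right_injective _ hb.ne' this
      exact hp.2 h4 (by rw [h3, smul_smul, inv_mul_cancel₀ h4.ne']; simp)

lemma acyc_bisect {Y : Type} [TopologicalSpace Y] {X : Set Y} (hX : IsCompact X)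
    {f : Y → ℝ} (hf : Continuous f) {φ : Y → E} (hφ : ContinuousOn φ X) (hi : InjOn φ X)
    {u v : ℝ} (huv : u ≤ v) (hXf : ∀ x ∈ X, f x ∈ Icc u v) {q : ℕ}
    (h1 : ∀ c ∈ Icc u v, Acyc q (Uc (φ '' (X ∩ f ⁻¹' {c}))))
    (h2 : ∀ c ∈ Icc u v, Acyc (q + 1) (Uc (φ '' (X ∩ f ⁻¹' {c})))) :
    Acyc q (Uc (φ '' X)) := by
  intro z hz
  have hcpt : ∀ T : Set ℝ, IsClosed T → IsCompact (φ '' (X ∩ f ⁻¹' T)) := fun T hT =>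
    (hX.inter_right (hT.preimage hf)).image_of_continuousOn (hφ.mono inter_subset_left)
  have key : ∀ c ∈ Icc u v, ∃ ε > 0, z ∈ B q (Uc (φ '' (X ∩ f ⁻¹' Icc (c - ε) (c + ε)))) := by
    intro c hc
    have hz' : z ∈ B q (Uc (φ '' (X ∩ f ⁻¹' {c}))) :=
      h1 c hc (Z_mono (Uc_anti (image_mono inter_subset_left)) hz)
    obtain ⟨e, he, hez⟩ := mem_B.1 hz'
    have heq : φ '' (X ∩ f ⁻¹' {c}) =
        ⋂ n : ℕ, φ '' (X ∩ f ⁻¹' Icc (c - 1 / (n + 1 : ℝ)) (c + 1 / (n + 1 : ℝ))) := by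
      rw [← InjOn.image_iInter_eq]
      · congr 1
        ext x
        simp only [mem_inter_iff, mem_preimage, mem_singleton_iff, mem_iInter, mem_Icc]
        constructor
        · rintro ⟨h, h'⟩ n
          have : 0 < 1 / (n + 1 : ℝ) := by positivity
          exact ⟨h, by linarith, by linarith⟩
        · intro h
          refine ⟨(h 0).1, ?_⟩
          by_contra hne
          have : 0 < |f x - c| := abs_pos.2 (sub_ne_zero.2 hne)
          obtain ⟨n, hn⟩ := exists_nat_one_div_lt this
          have := (h n).2
          have h3 : |f x - c| ≤ 1 / (n + 1 : ℝ) := abs_le.2 ⟨by linarith, by linarith⟩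
          linarith
      · refine hi.mono ?_
        exact iUnion_subset fun n => inter_subset_left
    rw [heq, Uc_iInter] at he
    obtain ⟨n, hn⟩ := C_iUnion (fun n => isOpen_Uc (hcpt _ isClosed_Icc)) (by
      intro a b hab
      refine Uc_anti (image_mono (inter_subset_inter_right _ (preimage_mono ?_)))
      have : 1 / (b + 1 : ℝ) ≤ 1 / (a + 1 : ℝ) := by
        have : (a : ℝ) ≤ b := by exact_mod_cast hab
        exact one_div_le_one_div_of_le (by positivity) (by linarith)
      exact Icc_subset_Icc (by linarith) (by linarith)) he
    exact ⟨1 / (n + 1 : ℝ), by positivity, mem_B.2 ⟨e, hn, hez⟩⟩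
  choose! ε hε hB using key
  obtain ⟨t, ht0, htm, ⟨N, hN⟩, ht⟩ := exists_monotone_Icc_subset_open_cover_Icc huv
    (c := fun i : Icc u v => Subtype.val ⁻¹' Ioo (i.1 - ε i) (i.1 + ε i))
    (fun i => isOpen_Ioo.preimage continuous_subtype_val) (by
      intro x _
      have := hε x.1 x.2
      exact mem_iUnion.2 ⟨x, by simp [this]⟩)
  have main : ∀ n, z ∈ B q (Uc (φ '' (X ∩ f ⁻¹' Icc u (t n)))) := by
    intro n
    induction n with
    | zero =>
      rw [ht0, Icc_self]
      exact h1 u ⟨le_rfl, huv⟩ (Z_mono (Uc_anti (image_mono inter_subset_left)) hz)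
    | succ n ih =>
      have hle : (t n : ℝ) ≤ t (n + 1) := htm (Nat.le_succ n)
      have hun : φ '' (X ∩ f ⁻¹' Icc u (t (n + 1))) =
          φ '' (X ∩ f ⁻¹' Icc u (t n)) ∪ φ '' (X ∩ f ⁻¹' Icc (t n) (t (n + 1))) := by
        rw [← image_union, ← inter_union_distrib_left, ← preimage_union,
          Icc_union_Icc_eq_Icc (t n).2.1 hle]
      have hin : φ '' (X ∩ f ⁻¹' {(t n : ℝ)}) =
          φ '' (X ∩ f ⁻¹' Icc u (t n)) ∩ φ '' (X ∩ f ⁻¹' Icc (t n) (t (n + 1))) := by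
        rw [← hi.image_inter inter_subset_left inter_subset_left, ← inter_inter_distrib_left,
          ← preimage_inter, Icc_inter_Icc_eq_singleton (t n).2.1 hle]
      rw [hun, Uc_union]
      refine mv_bound (isOpen_Uc (hcpt _ isClosed_Icc)) (isOpen_Uc (hcpt _ isClosed_Icc)) ?_ ih ?_
      · rw [← Uc_inter, ← hin]
        exact h2 _ (t n).2
      · obtain ⟨i, hi'⟩ := ht n
        refine B_mono (Uc_anti (image_mono (inter_subset_inter_right _ (preimage_mono ?_))))
          (hB i.1 i.2)
        have a1 := hi' (⟨le_rfl, hle⟩ : t n ∈ Icc (t n) (t (n + 1)))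
        have a2 := hi' (⟨hle, le_rfl⟩ : t (n + 1) ∈ Icc (t n) (t (n + 1)))
        exact Icc_subset_Icc (le_of_lt a1.1) (le_of_lt a2.2)
  have := main N
  rw [hN N le_rfl] at this
  rwa [inter_eq_left.2 (show X ⊆ f ⁻¹' Icc u v from fun x hx => hXf x hx)] at this

lemma acyc_slice {ι : Type} [Fintype ι] [DecidableEq ι] {X : Set (ι → ℝ)} (hX : IsCompact X)
    {φ : (ι → ℝ) → E} (hφ : ContinuousOn φ X) (hi : InjOn φ X)
    {a b : ι → ℝ} (hXf : X ⊆ Icc a b) {N : ℕ}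
    (h : X = Icc a b ∨ ∀ q ≤ N, Acyc q (Uc (∅ : Set E))) (k : ℕ) :
    ∀ (F : Finset ι), (Fᶜ).card = k → ∀ y ∈ Icc a b, ∀ q, q + k ≤ N →
      Acyc q (Uc (φ '' (X ∩ {x | ∀ i ∈ F, x i = y i}))) := by
  induction k with
  | zero =>
    intro F hF y hy q hq
    have hF' : F = Finset.univ := by simpa using hF
    have : {x : ι → ℝ | ∀ i ∈ F, x i = y i} = {y} := by
      ext x; simp [hF', funext_iff]
    rw [this]
    by_cases hyX : y ∈ X
    · rw [inter_eq_right.2 (singleton_subset_iff.2 hyX), image_singleton]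
      exact acyc_pt _ _
    · rw [inter_singleton_eq_empty.2 hyX, image_empty]
      rcases h with h | h
      · exact absurd (h ▸ hy) hyX
      · exact h q (by omega)
  | succ k ih =>
    intro F hF y hy q hq
    have : (Fᶜ).Nonempty := by rw [← Finset.card_pos]; omega
    obtain ⟨i, hiF⟩ := this
    have hcard : ((insert i F)ᶜ).card = k := by
      rw [Finset.compl_insert, Finset.card_erase_of_mem hiF, hF]; rfl
    have hslice : ∀ c, X ∩ {x | ∀ i ∈ F, x i = y i} ∩ (fun x : ι → ℝ => x i) ⁻¹' {c} =
        X ∩ {x | ∀ j ∈ insert i F, x j = Function.update y i c j} := by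
      intro c
      ext x
      simp only [mem_inter_iff, mem_ofPred_eq, mem_preimage, mem_singleton_iff,
        Finset.forall_mem_insert, Function.update_self, and_assoc, and_congr_right_iff]
      intro _
      rw [and_comm]
      refine and_congr_right fun _ => forall₂_congr fun j hj => ?_
      rw [Function.update_of_ne]
      rintro rfl
      exact (Finset.mem_compl.1 hiF) hj
    have hy' : ∀ c ∈ Icc (a i) (b i), Function.update y i c ∈ Icc a b := by
      intro c hc
      constructor
      · intro j
        by_cases hj : j = i
        · subst hj; simpa using hc.1
        · simpa [hj] using hy.1 j
      · intro j
        by_cases hj : j = i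
        · subst hj; simpa using hc.2
        · simpa [hj] using hy.2 j
    have hcl : IsClosed {x : ι → ℝ | ∀ i ∈ F, x i = y i} := by
      simp only [ofPred_forall]
      exact isClosed_biInter fun j _ => isClosed_eq (continuous_apply j) continuous_const
    refine acyc_bisect (hX.inter_right hcl) (continuous_apply i) (hφ.mono inter_subset_left)
      (hi.mono inter_subset_left) (u := a i) (v := b i) ((hy.1 i).trans (hy.2 i)) ?_ ?_ ?_
    · intro x hx
      exact ⟨(hXf hx.1).1 i, (hXf hx.1).2 i⟩
    · intro c hc
      rw [hslice]
      exact ih _ hcard _ (hy' c hc) _ (by omega)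
    · intro c hc
      rw [hslice]
      exact ih _ hcard _ (hy' c hc) _ (by omega)

lemma acyc_box {ι : Type} [Fintype ι] {a b : ι → ℝ} (hab : a ≤ b)
    {φ : (ι → ℝ) → E} (hφ : ContinuousOn φ (Icc a b)) (hi : InjOn φ (Icc a b)) (q : ℕ) :
    Acyc q (Uc (φ '' Icc a b)) := by
  classical
  have := acyc_slice isCompact_Icc hφ hi (N := q + Fintype.card ι) subset_rfl (Or.inl rfl)
    (Fintype.card ι) ∅ (by simp) a ⟨le_rfl, hab⟩ q le_rfl
  simpa using this

lemma acyc_dim {ι : Type} [Fintype ι] {N : ℕ} (h : ∀ q ≤ N, Acyc q (Uc (∅ : Set E)))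
    {X : Set (ι → ℝ)} (hX : IsCompact X)
    {φ : (ι → ℝ) → E} (hφ : ContinuousOn φ X) (hi : InjOn φ X) (q : ℕ)
    (hq : q + Fintype.card ι ≤ N) :
    Acyc q (Uc (φ '' X)) := by
  classical
  rcases X.eq_empty_or_nonempty with rfl | ⟨x, hx⟩
  · rw [image_empty]; exact h q (by omega)
  obtain ⟨R, hR⟩ := hX.isBounded.subset_closedBall (0 : ι → ℝ)
  have hs : X ⊆ Icc (fun _ => -R) (fun _ => R) := by
    intro x hx
    have h1 := mem_closedBall_zero_iff.1 (hR hx)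
    have h2 : ∀ i, |x i| ≤ R := fun i => (norm_le_pi_norm x i).trans h1
    exact ⟨fun i => (abs_le.1 (h2 i)).1, fun i => (abs_le.1 (h2 i)).2⟩
  have := acyc_slice hX hφ hi (N := N) hs (Or.inr h)
    (Fintype.card ι) ∅ (by simp) x (hs hx) q hq
  simpa using this

end Cone
end VennAux

namespace VennAux
section Sphere

variable {E : Type} [NormedAddCommGroup E] [NormedSpace ℝ E]

lemma acyc_ball {D : ℕ} {φ : EuclideanSpace ℝ (Fin D) → E} (hφ : ContinuousOn φ (closedBall 0 1))
    (hi : InjOn φ (closedBall 0 1)) (q : ℕ) : Acyc q (Uc (φ '' closedBall 0 1)) := by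
  let e := EuclideanSpace.equiv (Fin D) ℝ
  let s : Set (EuclideanSpace ℝ (Fin D)) := e ⁻¹' (closedBall 0 1)
  have hs : s = e ⁻¹' (closedBall 0 1) := rfl
  have hIcc : closedBall (0 : Fin D → ℝ) 1 = Icc (-1) 1 := by
    ext x
    simp only [mem_closedBall_zero_iff, mem_Icc, pi_norm_le_iff_of_nonneg zero_le_one,
      Real.norm_eq_abs, abs_le, Pi.le_def, Pi.neg_apply, Pi.one_apply, forall_and]
  have hscl : IsClosed s := isClosed_closedBall.preimage e.continuous
  have hsim : s = e.symm '' (closedBall 0 1) := by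
    rw [hs, ContinuousLinearEquiv.image_symm_eq_preimage]
  have hscp : IsCompact s := by
    rw [hsim]; exact (isCompact_closedBall _ _).image e.symm.continuous
  have hconv : Convex ℝ s := (convex_closedBall (0 : Fin D → ℝ) 1).linear_preimage e.toLinearMap
  have hinterior : (interior s).Nonempty := by
    refine ⟨0, mem_interior.2 ⟨e ⁻¹' (ball 0 1), preimage_mono ball_subset_closedBall,
      isOpen_ball.preimage e.continuous, ?_⟩⟩
    simp
  obtain ⟨h, -, h2, -⟩ := exists_homeomorph_image_interior_closure_frontier_eq_unitBall hconv hinterior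
    hscp.isBounded
  rw [hscl.closure_eq] at h2
  have hmaps : MapsTo (fun x => h (e.symm x)) (Icc (-1) 1) (closedBall 0 1) := by
    intro x hx
    rw [← h2, hsim, hIcc]
    exact ⟨_, ⟨x, hx, rfl⟩, rfl⟩
  have heq : φ '' closedBall 0 1 = (fun x => φ (h (e.symm x))) '' Icc (-1) 1 := by
    rw [← h2, hsim, hIcc, image_image, image_image]
  rw [heq]
  refine acyc_box ?_ ?_ ?_ q
  · intro i; simp
  · exact hφ.comp (h.continuous.comp e.symm.continuous).continuousOn hmaps
  · exact hi.comp ((h.injective.comp e.symm.injective).injOn) hmaps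

noncomputable def hemi {D : ℕ} (σ : ℝ) (y : EuclideanSpace ℝ (Fin D)) :
    EuclideanSpace ℝ (Fin (D + 1)) :=
  WithLp.toLp 2 (Fin.cons (σ * √(1 - ‖y‖ ^ 2)) y.ofLp)

lemma hemi_cont {D : ℕ} (σ : ℝ) : Continuous (hemi σ : EuclideanSpace ℝ (Fin D) → _) := by
  unfold hemi
  refine (PiLp.continuous_toLp 2 _).comp ?_
  refine continuous_pi fun i => ?_
  refine Fin.cases ?_ (fun j => ?_) i
  · simp only [Fin.cons_zero]; fun_prop
  · simp only [Fin.cons_succ]; fun_prop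

lemma hemi_inj {D : ℕ} (σ : ℝ) : Function.Injective (hemi σ : EuclideanSpace ℝ (Fin D) → _) := by
  intro x y h
  ext j
  have := congrArg (fun z : EuclideanSpace ℝ (Fin (D + 1)) => z j.succ) h
  simpa [hemi] using this

lemma norm_sq_succ {D : ℕ} (x : EuclideanSpace ℝ (Fin (D + 1))) :
    ‖x‖ ^ 2 = x 0 ^ 2 + ‖(WithLp.toLp 2 (fun j : Fin D => x j.succ) : EuclideanSpace ℝ (Fin D))‖ ^ 2 := by
  rw [EuclideanSpace.norm_sq_eq, EuclideanSpace.norm_sq_eq, Fin.sum_univ_succ]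
  simp

lemma hemi_zero {D : ℕ} (σ : ℝ) (y : EuclideanSpace ℝ (Fin D)) :
    hemi σ y 0 = σ * √(1 - ‖y‖ ^ 2) := by simp [hemi]

lemma hemi_succ {D : ℕ} (σ : ℝ) (y : EuclideanSpace ℝ (Fin D)) :
    (WithLp.toLp 2 (fun j : Fin D => hemi σ y j.succ) : EuclideanSpace ℝ (Fin D)) = y := by
  ext j; simp [hemi]

lemma hemi_mem {D : ℕ} {σ : ℝ} (hσ : σ ^ 2 = 1) {y : EuclideanSpace ℝ (Fin D)}
    (hy : y ∈ closedBall (0 : EuclideanSpace ℝ (Fin D)) 1) : hemi σ y ∈ sphere (0 : EuclideanSpace ℝ (Fin (D+1))) 1 := by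
  rw [mem_closedBall_zero_iff] at hy
  rw [mem_sphere_zero_iff_norm]
  have h := norm_sq_succ (hemi σ y)
  rw [hemi_zero, hemi_succ, mul_pow, hσ, Real.sq_sqrt (by nlinarith [norm_nonneg y])] at h
  have : ‖hemi σ y‖ ^ 2 = 1 := by linarith
  nlinarith [norm_nonneg (hemi σ y)]

lemma hemi_of {D : ℕ} {σ : ℝ} (hσ : σ ^ 2 = 1) {x : EuclideanSpace ℝ (Fin (D + 1))}
    (hx : x ∈ sphere (0 : EuclideanSpace ℝ (Fin (D+1))) 1) (h0 : 0 ≤ σ * x 0) :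
    (WithLp.toLp 2 (fun j : Fin D => x j.succ) : EuclideanSpace ℝ (Fin D)) ∈ closedBall (0 : EuclideanSpace ℝ (Fin D)) 1 ∧
    hemi σ (WithLp.toLp 2 (fun j : Fin D => x j.succ) : EuclideanSpace ℝ (Fin D)) = x := by
  have h := norm_sq_succ x
  rw [mem_sphere_zero_iff_norm] at hx
  rw [hx] at h
  set y := (WithLp.toLp 2 (fun j : Fin D => x j.succ) : EuclideanSpace ℝ (Fin D)) with hy
  constructor
  · rw [mem_closedBall_zero_iff]; nlinarith [norm_nonneg y, sq_nonneg (x 0)]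
  · ext i
    refine Fin.cases ?_ (fun j => ?_) i
    · rw [hemi_zero]
      have : √(1 - ‖y‖ ^ 2) = σ * x 0 := by
        rw [show 1 - ‖y‖ ^ 2 = (σ * x 0) ^ 2 by rw [mul_pow, hσ]; linarith, Real.sqrt_sq h0]
      rw [this, ← mul_assoc, ← sq, hσ, one_mul]
    · simp [hemi, hy]

lemma sphere_eq (D : ℕ) : sphere (0 : EuclideanSpace ℝ (Fin (D+1))) 1 =
    hemi 1 '' closedBall 0 1 ∪ hemi (-1) '' closedBall 0 1 := by
  ext x
  constructor
  · intro hx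
    rcases le_total 0 (x 0) with h | h
    · obtain ⟨h1, h2⟩ := hemi_of (σ := 1) (by norm_num) hx (by simpa)
      exact Or.inl ⟨_, h1, h2⟩
    · obtain ⟨h1, h2⟩ := hemi_of (σ := -1) (by norm_num) hx (by simpa)
      exact Or.inr ⟨_, h1, h2⟩
  · rintro (⟨y, hy, rfl⟩ | ⟨y, hy, rfl⟩)
    · exact hemi_mem (by norm_num) hy
    · exact hemi_mem (by norm_num) hy

lemma equator_eq (D : ℕ) : hemi 1 '' closedBall (0 : EuclideanSpace ℝ (Fin D)) 1 ∩
    hemi (-1) '' closedBall 0 1 = hemi 1 '' sphere 0 1 := by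
  ext x
  constructor
  · rintro ⟨⟨y, hy, rfl⟩, ⟨z, hz, hyz⟩⟩
    refine ⟨y, ?_, rfl⟩
    have h1 : z = y := by
      rw [← hemi_succ (-1) z, ← hemi_succ 1 y, hyz]
    subst h1
    have := congrArg (fun z : EuclideanSpace ℝ (Fin (D + 1)) => z 0) hyz
    simp only [hemi_zero] at this
    have h2 : √(1 - ‖z‖ ^ 2) = 0 := by linarith
    rw [Real.sqrt_eq_zero'] at h2
    rw [mem_closedBall_zero_iff] at hy
    rw [mem_sphere_zero_iff_norm]
    nlinarith [norm_nonneg z]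
  · rintro ⟨y, hy, rfl⟩
    refine ⟨⟨y, sphere_subset_closedBall hy, rfl⟩, ⟨y, sphere_subset_closedBall hy, ?_⟩⟩
    rw [mem_sphere_zero_iff_norm] at hy
    simp [hemi, hy]

lemma beta_sphere {D : ℕ} {φ : EuclideanSpace ℝ (Fin D) → E} (hφ : ContinuousOn φ (sphere 0 1))
    (hi : InjOn φ (sphere 0 1)) (q : ℕ) :
    beta q (Uc (φ '' sphere 0 1)) = beta (q + D) (Uc (∅ : Set E)) := by
  induction D generalizing q with
  | zero =>
    have : sphere (0 : EuclideanSpace ℝ (Fin 0)) 1 = ∅ := by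
      ext x; simp [Subsingleton.elim x 0]
    rw [this, image_empty]; rfl
  | succ D ih =>
    have hm : ∀ σ : ℝ, σ ^ 2 = 1 → MapsTo (hemi σ) (closedBall (0 : EuclideanSpace ℝ (Fin D)) 1)
      (sphere 0 1) := fun σ hσ y hy => hemi_mem hσ hy
    have hc : ∀ σ : ℝ, σ ^ 2 = 1 → ContinuousOn (φ ∘ hemi σ) (closedBall 0 1) := fun σ hσ =>
      hφ.comp (hemi_cont σ).continuousOn (hm σ hσ)
    have hj : ∀ σ : ℝ, σ ^ 2 = 1 → InjOn (φ ∘ hemi σ) (closedBall 0 1) := fun σ hσ =>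
      hi.comp (hemi_inj σ).injOn (hm σ hσ)
    have ho : ∀ σ : ℝ, σ ^ 2 = 1 → IsOpen (Uc (φ ∘ hemi σ '' closedBall 0 1)) := fun σ hσ =>
      isOpen_Uc ((isCompact_closedBall _ _).image_of_continuousOn (hc σ hσ))
    have ha : ∀ σ : ℝ, σ ^ 2 = 1 → ∀ q, Acyc q (Uc (φ ∘ hemi σ '' closedBall 0 1)) := fun σ hσ q =>
      acyc_ball (hc σ hσ) (hj σ hσ) q
    have p1 : (1 : ℝ) ^ 2 = 1 := by norm_num
    have p2 : (-1 : ℝ) ^ 2 = 1 := by norm_num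
    have key : φ ∘ hemi 1 '' closedBall 0 1 ∩ φ ∘ hemi (-1) '' closedBall 0 1 =
        φ ∘ hemi 1 '' sphere 0 1 := by
      rw [image_comp, image_comp, image_comp, ← equator_eq, hi.image_inter (hm 1 p1).image_subset (hm (-1) p2).image_subset]
    rw [sphere_eq, image_union, ← image_comp, ← image_comp, Uc_union,
      beta_inter_eq (ho 1 p1) (ho (-1) p2) (ha 1 p1 _) (ha (-1) p2 _) (ha 1 p1 _) (ha (-1) p2 _),
      ← Uc_inter, key, ih ((hc 1 p1).mono sphere_subset_closedBall)
      ((hj 1 p1).mono sphere_subset_closedBall)]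
    congr 1
    omega

lemma acyc_empty_low {m j : ℕ} (hj : j ≤ m) :
    Acyc j (Uc (∅ : Set (EuclideanSpace ℝ (Fin m)))) := by
  let φ : EuclideanSpace ℝ (Fin j) → EuclideanSpace ℝ (Fin m) := fun y =>
    WithLp.toLp 2 (fun i => if h : i.1 < j then y ⟨i.1, h⟩ else 0)
  have hφ : Continuous φ := by
    refine (PiLp.continuous_toLp 2 _).comp (continuous_pi fun i => ?_)
    by_cases h : i.1 < j
    · simp only [h, dite_true]; fun_prop
    · simp only [h, dite_false]; fun_prop
  have hi : Function.Injective φ := by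
    intro x y h
    ext i
    have := congrArg (fun z : EuclideanSpace ℝ (Fin m) => z ⟨i.1, by omega⟩) h
    simpa [φ] using this
  have := beta_sphere (φ := φ) hφ.continuousOn hi.injOn 0
  rw [zero_add] at this
  rw [← beta_eq_zero, ← this, beta_eq_zero]
  exact acyc_zero ⟨_, neg_one_mem_Uc _⟩

lemma Uc_round (E : Type) [NormedAddCommGroup E] [NormedSpace ℝ E] : Uc (sphere (0 : E) 1) =
    {p : E × ℝ | ‖p.1‖ < p.2} ∪ {p : E × ℝ | p.2 < ‖p.1‖} := by
  ext p
  simp only [mem_Uc, mem_union, mem_ofPred_eq, mem_sphere_zero_iff_norm]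
  constructor
  · rintro ⟨h0, h1⟩
    rcases lt_trichotomy ‖p.1‖ p.2 with h | h | h
    · exact Or.inl h
    · exfalso
      have hp : 0 ≤ p.2 := h ▸ norm_nonneg _
      rcases hp.eq_or_lt with hp | hp
      · rw [← hp, norm_eq_zero] at h
        exact h0 (Prod.ext h hp.symm)
      · refine h1 hp ?_
        rw [norm_smul, norm_inv, Real.norm_of_nonneg hp.le, h, inv_mul_cancel₀ hp.ne']
    · exact Or.inr h
  · intro h
    refine ⟨?_, fun hp h1 => ?_⟩
    · rintro rfl
      simp at h
    · rw [norm_smul, norm_inv, Real.norm_of_nonneg hp.le, inv_mul_eq_one₀ hp.ne'] at h1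
      rcases h with h | h <;> linarith

lemma round_facts (E : Type) [NormedAddCommGroup E] [NormedSpace ℝ E] :
    beta 1 (Uc (sphere (0 : E) 1)) = 1 ∧ Acyc 2 (Uc (sphere (0 : E) 1)) := by
  have o1 : IsOpen {p : E × ℝ | ‖p.1‖ < p.2} := isOpen_lt continuous_fst.norm continuous_snd
  have o2 : IsOpen {p : E × ℝ | p.2 < ‖p.1‖} := isOpen_lt continuous_snd continuous_fst.norm
  have m1 : ((0, 1) : E × ℝ) ∈ {p : E × ℝ | ‖p.1‖ < p.2} := by simp
  have m2 : ((0, -1) : E × ℝ) ∈ {p : E × ℝ | p.2 < ‖p.1‖} := by simp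
  have s1 : StarConvex ℝ ((0, 1) : E × ℝ) {p : E × ℝ | ‖p.1‖ < p.2} := by
    intro p hp a b ha hb hab
    have hp' : ‖p.1‖ < p.2 := hp
    simp only [mem_ofPred_eq, Prod.fst_add, Prod.smul_fst, smul_zero, zero_add, Prod.snd_add,
      Prod.smul_snd, norm_smul, Real.norm_of_nonneg hb, smul_eq_mul, mul_one]
    rcases hb.eq_or_lt with rfl | hb
    · linarith
    · nlinarith
  have s2 : StarConvex ℝ ((0, -1) : E × ℝ) {p : E × ℝ | p.2 < ‖p.1‖} := by
    intro p hp a b ha hb hab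
    have hp' : p.2 < ‖p.1‖ := hp
    simp only [mem_ofPred_eq, Prod.fst_add, Prod.smul_fst, smul_zero, zero_add, Prod.snd_add,
      Prod.smul_snd, norm_smul, Real.norm_of_nonneg hb, smul_eq_mul, mul_neg, mul_one]
    rcases hb.eq_or_lt with rfl | hb
    · linarith
    · nlinarith
  have hdis : Disjoint {p : E × ℝ | ‖p.1‖ < p.2} {p : E × ℝ | p.2 < ‖p.1‖} := by
    rw [Set.disjoint_left]
    intro p h1 h2
    exact lt_asymm (show ‖p.1‖ < p.2 from h1) h2
  constructor
  · have := beta_one (fun b : Bool => cond b {p : E × ℝ | ‖p.1‖ < p.2} {p : E × ℝ | p.2 < ‖p.1‖})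
      (by rintro (_ | _); exacts [o2, o1])
      (by rintro (_ | _)
          exacts [(s2.isPathConnected m2).isConnected.isPreconnected,
            (s1.isPathConnected m1).isConnected.isPreconnected])
      (by rintro (_ | _); exacts [⟨_, m2⟩, ⟨_, m1⟩])
      (by rintro (_ | _) (_ | _) h
          exacts [absurd rfl h, hdis.symm, hdis, absurd rfl h])
    rw [← union_eq_iUnion, ← Uc_round] at this
    have h2 : beta 1 (Uc (sphere (0 : E) 1)) + 1 = 1 + 1 := by
      rw [this]; norm_num
    exact Cardinal.eq_of_add_eq_add_right h2 Cardinal.one_lt_aleph0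
  · rw [Uc_round]
    refine acyc_union o1 o2 (acyc_of_star m1 s1) (acyc_of_star m2 s2) ?_
    rw [hdis.inter_eq]
    exact acyc_empty 0

lemma empty_top (m : ℕ) : beta (m + 1) (Uc (∅ : Set (EuclideanSpace ℝ (Fin m)))) = 1 ∧
    Acyc (m + 2) (Uc (∅ : Set (EuclideanSpace ℝ (Fin m)))) := by
  have h := fun q => beta_sphere (φ := (id : EuclideanSpace ℝ (Fin m) → _)) continuousOn_id
    Function.injective_id.injOn q
  obtain ⟨h1, h2⟩ := round_facts (EuclideanSpace ℝ (Fin m))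
  constructor
  · rw [add_comm, ← h, image_id, h1]
  · rw [← beta_eq_zero, add_comm, ← h, image_id, beta_eq_zero]
    exact h2

end Sphere
end VennAux

namespace VennAux
section Union

lemma sphere_param {E : Type} [NormedAddCommGroup E] [NormedSpace ℝ E] {d : ℕ} {A : Set E}
    (hA : HomeoToSphere d A) :
    ∃ φ : EuclideanSpace ℝ (Fin (d + 1)) → E, ContinuousOn φ (sphere 0 1) ∧
      InjOn φ (sphere 0 1) ∧ φ '' sphere 0 1 = A := by
  classical
  obtain ⟨e⟩ := hA
  refine ⟨fun x => if h : x ∈ sphere (0 : EuclideanSpace ℝ (Fin (d + 1))) 1 then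
    (e.symm ⟨x, h⟩ : E) else 0, ?_, ?_, ?_⟩
  · rw [continuousOn_iff_continuous_domRestrict]
    have : (sphere (0 : EuclideanSpace ℝ (Fin (d + 1))) 1).domRestrict (fun x =>
        if h : x ∈ sphere (0 : EuclideanSpace ℝ (Fin (d + 1))) 1 then
        (e.symm ⟨x, h⟩ : E) else 0) = fun x => (e.symm x : E) := by
      ext x
      simp only [domRestrict_apply]
      rw [dif_pos x.2]
    rw [this]
    exact continuous_subtype_val.comp e.symm.continuous
  · intro x hx y hy h
    simp only [dif_pos hx, dif_pos hy] at h
    have := e.symm.injective (Subtype.ext h)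
    exact congrArg Subtype.val this
  · ext a
    constructor
    · rintro ⟨x, hx, rfl⟩
      simp only [dif_pos hx]
      exact (e.symm ⟨x, hx⟩).2
    · intro ha
      refine ⟨e ⟨a, ha⟩, (e ⟨a, ha⟩).2, ?_⟩
      simp only [dif_pos (e ⟨a, ha⟩).2, Subtype.coe_eta, Homeomorph.symm_apply_apply]

lemma beta_homeo {E : Type} [NormedAddCommGroup E] [NormedSpace ℝ E] {d : ℕ} {A : Set E}
    (hA : HomeoToSphere d A) (q : ℕ) : beta q (Uc A) = beta (q + d + 1) (Uc (∅ : Set E)) := by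
  obtain ⟨φ, h1, h2, rfl⟩ := sphere_param hA
  rw [beta_sphere h1 h2]; rfl

lemma acyc_proper {m d : ℕ} {A K : Set (EuclideanSpace ℝ (Fin m))} (hAc : IsCompact A)
    (hA : HomeoToSphere d A) (hK : IsCompact K) (hKA : K ⊆ A) (hne : ¬ A ⊆ K) {q : ℕ}
    (hq : q + d ≤ m) : Acyc q (Uc K) := by
  obtain ⟨e⟩ := hA
  obtain ⟨a, ha, haK⟩ := not_subset.1 hne
  have : Fact (Module.finrank ℝ (EuclideanSpace ℝ (Fin (d + 1))) = d + 1) := ⟨by simp⟩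
  let v := e ⟨a, ha⟩
  let st := stereographic' d v
  have hsrc : st.source = {v}ᶜ := stereographic'_source v
  have htgt : st.target = univ := stereographic'_target v
  let φ : (Fin d → ℝ) → EuclideanSpace ℝ (Fin m) := fun y => (e.symm (st.symm (WithLp.toLp 2 y)) : _)
  have hφc : Continuous φ := by
    have h1 : Continuous st.symm := by
      rw [← continuousOn_univ, ← htgt]; exact st.continuousOn_symm
    exact continuous_subtype_val.comp (e.symm.continuous.comp (h1.comp (PiLp.continuous_toLp 2 _)))
  have hφi : Function.Injective φ := by
    intro x y h
    have h1 := e.symm.injective (Subtype.ext h)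
    have h2 := st.symm.injOn (by simp [htgt]) (by simp [htgt]) h1
    exact WithLp.toLp_injective 2 h2
  let K' : Set A := Subtype.val ⁻¹' K
  have hK' : IsCompact K' := hAc.isClosed.isClosedEmbedding_subtypeVal.isCompact_preimage hK
  let X : Set (Fin d → ℝ) := (fun x : A => (st (e x)).ofLp) '' K'
  have hsub : ∀ x ∈ K', e x ∈ st.source := by
    intro x hx
    rw [hsrc]
    intro h
    have h1 : x = ⟨a, ha⟩ := e.injective h
    rw [h1] at hx
    exact haK hx
  have hX : IsCompact X := by
    refine hK'.image_of_continuousOn ?_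
    refine (PiLp.continuous_ofLp 2 _).comp_continuousOn ?_
    exact st.continuousOn.comp e.continuous.continuousOn hsub
  have hKX : K = φ '' X := by
    rw [image_image]
    have : ∀ x ∈ K', φ ((st (e x)).ofLp) = x := by
      intro x hx
      simp only [φ]
      rw [WithLp.toLp_ofLp, st.left_inv (hsub x hx), e.symm_apply_apply]
    rw [image_congr this, Subtype.image_preimage_coe, inter_eq_right.2 hKA]
  rw [hKX]
  exact acyc_dim (fun q hq => acyc_empty_low hq) hX hφc.continuousOn hφi.injOn q (by simpa using hq)

lemma acyc_homeo {m d : ℕ} {A : Set (EuclideanSpace ℝ (Fin m))} (hA : HomeoToSphere d A) {q : ℕ}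
    (hq : q + d < m) : Acyc q (Uc A) := by
  rw [← beta_eq_zero, beta_homeo hA, beta_eq_zero]
  exact acyc_empty_low (by omega)

lemma beta_homeo_one {m d : ℕ} {A : Set (EuclideanSpace ℝ (Fin m))} (hA : HomeoToSphere d A)
    {q : ℕ} (hq : q + d = m) : beta q (Uc A) = 1 := by
  rw [beta_homeo hA, hq]
  exact (empty_top m).1

lemma acyc_homeo_top {m d : ℕ} {A : Set (EuclideanSpace ℝ (Fin m))} (hA : HomeoToSphere d A)
    {q : ℕ} (hq : q + d = m + 1) : Acyc q (Uc A) := by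
  rw [← beta_eq_zero, beta_homeo hA, hq, beta_eq_zero]
  exact (empty_top m).2

lemma union_facts {m d : ℕ} (𝒞 : Finset (Set (EuclideanSpace ℝ (Fin m))))
    (h : ∀ A ∈ 𝒞, IsCompact A ∧ HomeoToSphere d A) :
    IsCompact (⋃₀ (𝒞 : Set (Set (EuclideanSpace ℝ (Fin m))))) ∧
    (∀ q, q + d < m → Acyc q (Uc (⋃₀ (𝒞 : Set (Set (EuclideanSpace ℝ (Fin m))))))) ∧
    (∀ q, q + d = m → (⋃₀ (𝒞 : Set (Set (EuclideanSpace ℝ (Fin m)))) = ∅ ∨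
      HomeoToSphere d (⋃₀ (𝒞 : Set (Set (EuclideanSpace ℝ (Fin m))))) ∨
      2 ≤ beta q (Uc (⋃₀ (𝒞 : Set (Set (EuclideanSpace ℝ (Fin m)))))))) := by
  classical
  induction 𝒞 using Finset.induction_on with
  | empty =>
    simp only [Finset.coe_empty, sUnion_empty]
    exact ⟨isCompact_empty, fun q hq => acyc_empty_low (by omega), fun q _ => Or.inl trivial⟩
  | insert A 𝒞 hA ih =>
    obtain ⟨hR, h1, h2⟩ := ih fun B hB => h B (Finset.mem_insert_of_mem hB)
    obtain ⟨hAc, hAs⟩ := h A (Finset.mem_insert_self _ _)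
    rw [Finset.coe_insert, sUnion_insert]
    generalize ⋃₀ (𝒞 : Set (Set (EuclideanSpace ℝ (Fin m)))) = R at *
    refine ⟨hAc.union hR, ?_⟩
    by_cases hAR : A ⊆ R
    · rw [union_eq_right.2 hAR]
      exact ⟨h1, h2⟩
    by_cases hRA : R ⊆ A
    · rw [union_eq_left.2 hRA]
      exact ⟨fun q hq => acyc_homeo hAs hq, fun q hq => Or.inr (Or.inl hAs)⟩
    have hp : ∀ q, q + d ≤ m → Acyc q (Uc (A ∩ R)) := fun q hq =>
      acyc_proper hAc hAs (hAc.inter hR) inter_subset_left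
        (fun h => hAR (h.trans inter_subset_right)) hq
    rw [Uc_union]
    constructor
    · intro q hq
      refine acyc_inter (isOpen_Uc hAc) (isOpen_Uc hR) (acyc_homeo hAs hq) (h1 q hq) ?_
      rw [← Uc_inter]
      exact hp _ (by omega)
    · intro q hq
      right; right
      have h3 := beta_inter_ge (q := q) (isOpen_Uc hAc) (isOpen_Uc hR) (by
        rw [← Uc_inter]; exact hp q hq.le)
      rw [beta_homeo_one hAs hq] at h3
      refine le_trans ?_ h3
      rcases h2 q hq with h2 | h2 | h2
      · exact absurd (h2 ▸ empty_subset _) hRA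
      · rw [beta_homeo_one h2 hq, one_add_one_eq_two]
      · exact h2.trans (self_le_add_left _ _)

end Union
end VennAux

namespace VennAux
section Comb

variable {E : Type} [NormedAddCommGroup E] [NormedSpace ℝ E] {ι : Type} [DecidableEq ι]

lemma biInter_insert' (A : ι → Set E) (j : ι) {s : Finset ι} (hs : s.Nonempty) :
    (⋂ i ∈ s, (A j ∩ A i)) = ⋂ i ∈ insert j s, A i := by
  obtain ⟨k, hk⟩ := hs
  ext x
  simp only [mem_iInter, mem_inter_iff, Finset.forall_mem_insert]
  exact ⟨fun h => ⟨(h k hk).1, fun i hi => (h i hi).2⟩, fun h i hi => ⟨h.1, h.2 i hi⟩⟩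

lemma inter_biUnion (A : ι → Set E) (j : ι) (s : Finset ι) :
    (A j ∩ ⋃ i ∈ s, A i) = ⋃ i ∈ s, (A j ∩ A i) := by
  ext x; simp

lemma isCompact_bU {A : ι → Set E} (hA : ∀ i, IsCompact (A i)) (F : Finset ι) :
    IsCompact (⋃ i ∈ F, A i) := F.isCompact_biUnion fun i _ => hA i

lemma van (F : Finset ι) (hF : F.Nonempty) : ∀ (A : ι → Set E) (_ : ∀ i, IsCompact (A i)) (q : ℕ),
    (∀ s ⊆ F, s.Nonempty → ∀ r, q + s.card = r + 1 → Acyc r (Uc (⋂ i ∈ s, A i))) →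
    Acyc q (Uc (⋃ i ∈ F, A i)) := by
  induction F using Finset.induction_on with
  | empty => simp at hF
  | insert j F hj ih =>
    intro A hA q h
    have hAj : Acyc q (Uc (A j)) := by simpa using h {j} (by simp) (by simp) q (by simp)
    rw [Finset.set_biUnion_insert]
    rcases F.eq_empty_or_nonempty with rfl | hne
    · simpa using hAj
    rw [Uc_union]
    refine acyc_inter (isOpen_Uc (hA j)) (isOpen_Uc (isCompact_bU hA F)) hAj ?_ ?_
    · exact ih hne A hA q fun s hs => h s (hs.trans (Finset.subset_insert _ _))
    · rw [← Uc_inter, inter_biUnion]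
      refine ih hne _ (fun i => (hA j).inter (hA i)) _ fun s hs hsn r hr => ?_
      rw [biInter_insert' A j hsn]
      refine h _ (Finset.insert_subset_insert _ hs) (by simp) r ?_
      rw [Finset.card_insert_of_notMem fun hh => hj (hs hh)]
      omega

lemma addl (F : Finset ι) (hF : F.Nonempty) : ∀ (A : ι → Set E) (_ : ∀ i, IsCompact (A i)) (q : ℕ),
    (∀ s ⊆ F, s.Nonempty → s ≠ F → Acyc (q + s.card) (Uc (⋂ i ∈ s, A i))) →
    (∀ s ⊆ F, 2 ≤ s.card → ∀ r, q + s.card = r + 2 → Acyc r (Uc (⋂ i ∈ s, A i))) →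
    beta q (Uc (⋃ i ∈ F, A i)) = ∑ s ∈ F.powerset,
      if s = ∅ then 0 else beta (q + (s.card - 1)) (Uc (⋂ i ∈ s, A i)) := by
  induction F using Finset.induction_on with
  | empty => simp at hF
  | insert j F hj ih =>
    intro A hA q h1 h2
    rcases F.eq_empty_or_nonempty with rfl | hne
    · rw [Finset.sum_powerset_insert hj]; simp
    have hsub : F ⊆ insert j F := Finset.subset_insert _ _
    have hneF : ∀ s ⊆ F, s ≠ insert j F := by
      rintro s hs rfl
      exact hj (hs (Finset.mem_insert_self _ _))
    have hcard : ∀ s ⊆ F, (insert j s).card = s.card + 1 := fun s hs =>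
      Finset.card_insert_of_notMem fun hh => hj (hs hh)
    have hAj : Acyc (q + 1) (Uc (A j)) := by
      have := h1 {j} (by simp) (by simp) (by
        intro h
        obtain ⟨k, hk⟩ := hne
        have : k ∈ ({j} : Finset ι) := h ▸ Finset.mem_insert_of_mem hk
        rw [Finset.mem_singleton] at this
        exact hj (this ▸ hk))
      simpa using this
    rw [Finset.set_biUnion_insert, Uc_union, beta_inter_add (isOpen_Uc (hA j))
      (isOpen_Uc (isCompact_bU hA F)) hAj, ← Uc_inter, inter_biUnion]
    · rw [ih hne A hA q (fun s hs hs' _ => h1 s (hs.trans hsub) hs' (hneF s hs))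
        (fun s hs => h2 s (hs.trans hsub)),
        ih hne _ (fun i => (hA j).inter (hA i)) (q + 1)]
      · rw [Finset.sum_powerset_insert hj]
        have : ∀ t ∈ F.powerset, (if insert j t = ∅ then 0 else
            beta (q + ((insert j t).card - 1)) (Uc (⋂ i ∈ insert j t, A i))) =
            (if t = ∅ then beta q (Uc (A j)) else 0) +
            (if t = ∅ then 0 else beta (q + 1 + (t.card - 1)) (Uc (⋂ i ∈ t, (A j ∩ A i)))) := by
          intro t ht
          rw [if_neg (Finset.insert_ne_empty _ _), hcard t (Finset.mem_powerset.1 ht)]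
          by_cases h0 : t = ∅
          · simp [h0]
          · rw [if_neg h0, if_neg h0, zero_add,
              biInter_insert' A j (Finset.nonempty_iff_ne_empty.2 h0)]
            congr 1
            have := Finset.card_pos.2 (Finset.nonempty_iff_ne_empty.2 h0)
            omega
        rw [Finset.sum_congr rfl this, Finset.sum_add_distrib, Finset.sum_ite_eq',
          if_pos (Finset.empty_mem_powerset _)]
        rw [add_comm (beta q (Uc (A j))), add_assoc]
      · intro s hs hsn hsF
        rw [biInter_insert' A j hsn]
        have := h1 (insert j s) (Finset.insert_subset_insert _ hs) (by simp) (by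
          intro h
          apply hsF
          have h3 := congrArg (fun t => Finset.erase t j) h
          simpa [Finset.erase_insert hj, Finset.erase_insert (fun hh => hj (hs hh))] using h3)
        rw [hcard s hs] at this
        rwa [show q + 1 + s.card = q + (s.card + 1) by omega]
      · intro s hs hsn r hr
        rw [biInter_insert' A j (Finset.card_pos.1 (by omega))]
        refine h2 _ (Finset.insert_subset_insert _ hs) ?_ r ?_ <;> rw [hcard s hs] <;> omega
    · refine van F hne A hA _ fun s hs hsn r hr => ?_
      have := h1 s (hs.trans hsub) hsn (hneF s hs)
      rwa [show r = q + s.card by omega]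
    · rw [← Uc_inter, inter_biUnion]
      refine van F hne _ (fun i => (hA j).inter (hA i)) _ fun s hs hsn r hr => ?_
      rw [biInter_insert' A j hsn]
      have := Finset.card_pos.2 hsn
      refine h2 _ (Finset.insert_subset_insert _ hs) ?_ r ?_ <;> rw [hcard s hs] <;> omega

end Comb
end VennAux

namespace VennAux
section Sides

variable {E : Type} [NormedAddCommGroup E] [NormedSpace ℝ E]

lemma mem_side0 {S : Set E} {x : E} :
    x ∈ surfSide S 0 ↔ x ∉ S ∧ IsBounded (connectedComponentIn Sᶜ x) := by simp [surfSide]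

lemma mem_side1 {S : Set E} {x : E} :
    x ∈ surfSide S 1 ↔ x ∉ S ∧ ¬ IsBounded (connectedComponentIn Sᶜ x) := by simp [surfSide]

lemma side_cases {S : Set E} {x : E} (hx : x ∉ S) : x ∈ surfSide S 0 ∨ x ∈ surfSide S 1 := by
  rw [mem_side0, mem_side1]; tauto

lemma side_disj {S : Set E} {x : E} (h0 : x ∈ surfSide S 0) (h1 : x ∈ surfSide S 1) : False := by
  rw [mem_side0] at h0; rw [mem_side1] at h1; exact h1.2 h0.2

lemma side_open {S : Set E} (hS : IsCompact S) (ε : Fin 2) : IsOpen (surfSide S ε) := by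
  rw [isOpen_iff_mem_nhds]
  intro x hx
  have hxS : x ∈ Sᶜ := by
    fin_cases ε
    · exact (mem_side0.1 hx).1
    · exact (mem_side1.1 hx).1
  have ho : IsOpen (connectedComponentIn Sᶜ x) := hS.isClosed.isOpen_compl.connectedComponentIn
  refine Filter.mem_of_superset (ho.mem_nhds (mem_connectedComponentIn hxS)) ?_
  intro y hy
  have heq := connectedComponentIn_eq hy
  have hyS : y ∉ S := connectedComponentIn_subset _ _ hy
  fin_cases ε
  · exact mem_side0.2 ⟨hyS, heq ▸ (mem_side0.1 hx).2⟩
  · exact mem_side1.2 ⟨hyS, heq ▸ (mem_side1.1 hx).2⟩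

lemma far_side {S : Set E} {R : ℝ} (hR : 0 < R) (hS : S ⊆ closedBall 0 R) {x : E} (hx : R < ‖x‖) :
    x ∈ surfSide S 1 := by
  have hxS : ∀ τ : ℝ, 1 ≤ τ → τ • x ∉ S := by
    intro τ hτ h
    have := mem_closedBall_zero_iff.1 (hS h)
    rw [norm_smul, Real.norm_of_nonneg (by linarith)] at this
    nlinarith
  refine mem_side1.2 ⟨by simpa using hxS 1 le_rfl, fun hb => ?_⟩
  have hray : (fun τ : ℝ => τ • x) '' Ici 1 ⊆ connectedComponentIn Sᶜ x := by
    refine IsPreconnected.subset_connectedComponentIn ?_ ?_ ?_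
    · exact isPreconnected_Ici.image _ (by fun_prop)
    · exact ⟨1, by simp, by simp⟩
    · rintro _ ⟨τ, hτ, rfl⟩
      exact hxS τ hτ
  obtain ⟨M, hM⟩ := (hb.subset hray).subset_closedBall 0
  have hx0 : 0 < ‖x‖ := hR.trans hx
  have h1 := hM ⟨max 1 ((M + 1) / ‖x‖), by simp, rfl⟩
  rw [mem_closedBall_zero_iff] at h1
  simp only [norm_smul] at h1
  rw [Real.norm_of_nonneg (by positivity)] at h1
  have h2 : (M + 1) / ‖x‖ * ‖x‖ ≤ max 1 ((M + 1) / ‖x‖) * ‖x‖ := by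
    gcongr; exact le_max_right _ _
  rw [div_mul_cancel₀ _ hx0.ne'] at h2
  linarith

lemma compact_fill [ProperSpace E] {S : Set E} (hS : IsCompact S) : IsCompact (surfSide S 1)ᶜ := by
  obtain ⟨R, hR⟩ := hS.isBounded.subset_closedBall (0 : E)
  refine (isCompact_closedBall (0 : E) (max R 1)).of_isClosed_subset
    (side_open hS 1).isClosed_compl ?_
  intro x hx
  rw [mem_closedBall_zero_iff]
  by_contra h
  exact hx (far_side (lt_max_of_lt_right one_pos)
    (hR.trans (closedBall_subset_closedBall (le_max_left _ _))) (not_le.1 h))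

/-- conical side -/
def coneSide (S : Set E) (ε : Fin 2) : Set (E × ℝ) :=
  if ε = 0 then {p | 0 < p.2 ∧ p.2⁻¹ • p.1 ∈ surfSide S 0} else Uc (surfSide S 1)ᶜ

lemma mem_cone0 {S : Set E} {p : E × ℝ} :
    p ∈ coneSide S 0 ↔ 0 < p.2 ∧ p.2⁻¹ • p.1 ∈ surfSide S 0 := by simp [coneSide]

lemma mem_cone1 {S : Set E} {p : E × ℝ} :
    p ∈ coneSide S 1 ↔ p ≠ 0 ∧ (0 < p.2 → p.2⁻¹ • p.1 ∈ surfSide S 1) := by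
  simp [coneSide, mem_Uc]

lemma mem_cone_pos {S : Set E} {ε : Fin 2} {p : E × ℝ} (hp : 0 < p.2) :
    p ∈ coneSide S ε ↔ p.2⁻¹ • p.1 ∈ surfSide S ε := by
  have h0 : p ≠ 0 := by rintro rfl; simp at hp
  fin_cases ε
  · exact mem_cone0.trans (by simp [hp])
  · exact mem_cone1.trans (by simp [hp, h0])

lemma cone_open [ProperSpace E] {S : Set E} (hS : IsCompact S) (ε : Fin 2) :
    IsOpen (coneSide S ε) := by
  fin_cases ε
  · have : IsOpen ({p : E × ℝ | 0 < p.2} ∩ (fun p : E × ℝ => p.2⁻¹ • p.1) ⁻¹' surfSide S 0) := by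
      refine ContinuousOn.isOpen_inter_preimage ?_ (isOpen_lt continuous_const continuous_snd)
        (side_open hS 0)
      refine ContinuousOn.smul (ContinuousOn.inv₀ (by fun_prop) ?_) (by fun_prop)
      intro x hx
      exact ne_of_gt hx
    convert this using 1
    ext p; exact mem_cone0
  · have := isOpen_Uc (compact_fill hS)
    have h2 : coneSide S 1 = Uc (surfSide S 1)ᶜ := by simp [coneSide]
    rw [← h2] at this
    exact this

lemma beta_venn [ProperSpace E] [Nontrivial E] {ι : Type} [Fintype ι] [Nonempty ι] (S : ι → Set E)
    (hS : ∀ i, IsCompact (S i))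
    (h : ∀ ε : ι → Fin 2, (⋂ i, surfSide (S i) (ε i)).Nonempty ∧
      IsConnected (⋂ i, surfSide (S i) (ε i))) :
    beta 1 (Uc (⋃ i, S i)) + 1 = 2 ^ Fintype.card ι := by
  classical
  have hU : Uc (⋃ i, S i) = ⋃ ε : ι → Fin 2, ⋂ i, coneSide (S i) (ε i) := by
    ext p
    rw [mem_Uc]
    constructor
    · rintro ⟨h0, h1⟩
      have : ∀ i, ∃ e : Fin 2, p ∈ coneSide (S i) e := by
        intro i
        by_cases hp : 0 < p.2
        · rcases side_cases (fun hh => h1 hp (mem_iUnion.2 ⟨i, hh⟩)) with h2 | h2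
          · exact ⟨0, (mem_cone_pos hp).2 h2⟩
          · exact ⟨1, (mem_cone_pos hp).2 h2⟩
        · exact ⟨1, mem_cone1.2 ⟨h0, fun h => absurd h hp⟩⟩
      choose ε hε using this
      exact mem_iUnion.2 ⟨ε, mem_iInter.2 hε⟩
    · intro hmem
      obtain ⟨ε, hε⟩ := mem_iUnion.1 hmem
      rw [mem_iInter] at hε
      constructor
      · rintro rfl
        obtain ⟨i⟩ := ‹Nonempty ι›
        have := hε i
        generalize ε i = e at this
        fin_cases e
        · have := (mem_cone0.1 this).1; simp at this
        · exact (mem_cone1.1 this).1 rfl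
      · intro hp hh
        obtain ⟨i, hi⟩ := mem_iUnion.1 hh
        have := (mem_cone_pos hp).1 (hε i)
        generalize ε i = e at this
        fin_cases e
        · exact (mem_side0.1 this).1 hi
        · exact (mem_side1.1 this).1 hi
  obtain ⟨R, hR0, hR⟩ : ∃ R : ℝ, 0 < R ∧ ∀ i, S i ⊆ closedBall 0 R := by
    have : IsBounded (⋃ i, S i) := (isCompact_iUnion hS).isBounded
    obtain ⟨R, hR⟩ := this.subset_closedBall (0 : E)
    exact ⟨max R 1, lt_max_of_lt_right one_pos, fun i => (subset_iUnion S i).trans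
      (hR.trans (closedBall_subset_closedBall (le_max_left _ _)))⟩
  have hP : ∀ ε : ι → Fin 2, IsPreconnected
      ({p : E × ℝ | 0 < p.2} ∩ ⋂ i, coneSide (S i) (ε i)) := by
    intro ε
    have h1 : IsPreconnected ((fun z : E × ℝ => (z.2 • z.1, z.2)) ''
        ((⋂ i, surfSide (S i) (ε i)) ×ˢ Ioi (0 : ℝ))) :=
      ((h ε).2.isPreconnected.prod isPreconnected_Ioi).image _ (by fun_prop)
    convert h1 using 1
    ext p
    constructor
    · rintro ⟨hp, h2⟩
      have hp' : 0 < p.2 := hp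
      rw [mem_iInter] at h2
      refine ⟨(p.2⁻¹ • p.1, p.2), ⟨mem_iInter.2 fun i => (mem_cone_pos hp).1 (h2 i), hp⟩, ?_⟩
      simp [smul_smul, mul_inv_cancel₀ hp'.ne']
    · rintro ⟨⟨x, t⟩, ⟨hx, ht⟩, rfl⟩
      have ht' : 0 < t := ht
      refine ⟨ht, mem_iInter.2 fun i => (mem_cone_pos (p := (t • x, t)) ht).2 ?_⟩
      have := mem_iInter.1 hx i
      simpa [smul_smul, inv_mul_cancel₀ ht'.ne'] using this
  have hconn : ∀ ε : ι → Fin 2, IsPreconnected (⋂ i, coneSide (S i) (ε i)) := by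
    intro ε
    by_cases h0 : ∃ i, ε i = 0
    · obtain ⟨i, hi⟩ := h0
      have := hP ε
      rwa [inter_eq_right.2] at this
      intro p hp
      have h1 := mem_iInter.1 hp i
      rw [hi] at h1
      exact (mem_cone0.1 h1).1
    · have h1 : ∀ i, ε i = 1 := by
        intro i
        have : ε i ≠ 0 := fun hh => h0 ⟨i, hh⟩
        omega
      have hs : StarConvex ℝ ((0, -1) : E × ℝ) {p : E × ℝ | R * p.2 < ‖p.1‖} := by
        intro p hp a b ha hb hab
        have hp' : R * p.2 < ‖p.1‖ := hp
        simp only [mem_ofPred_eq, Prod.fst_add, Prod.smul_fst, smul_zero, zero_add, Prod.snd_add,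
          Prod.smul_snd, norm_smul, Real.norm_of_nonneg hb, smul_eq_mul, mul_neg, mul_one]
        rcases hb.eq_or_lt with rfl | hb
        · have : a = 1 := by linarith
          subst this; simp [hR0]
        · have : b * (R * p.2) < b * ‖p.1‖ := by gcongr
          have : 0 ≤ R * a := by positivity
          linarith
      have hN : IsPreconnected {p : E × ℝ | R * p.2 < ‖p.1‖} :=
        (hs.isPathConnected (by simp [hR0])).isConnected.isPreconnected
      have hNW : {p : E × ℝ | R * p.2 < ‖p.1‖} ⊆ ⋂ i, coneSide (S i) (ε i) := by
        intro p hp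
        have hp' : R * p.2 < ‖p.1‖ := hp
        refine mem_iInter.2 fun i => ?_
        rw [h1 i, mem_cone1]
        refine ⟨by rintro rfl; simp at hp', fun h2 => far_side hR0 (hR i) ?_⟩
        rw [norm_smul, norm_inv, Real.norm_of_nonneg h2.le, lt_inv_mul_iff₀ h2]
        linarith
      have heq : (⋂ i, coneSide (S i) (ε i)) = {p : E × ℝ | R * p.2 < ‖p.1‖} ∪
          ({p : E × ℝ | 0 < p.2} ∩ ⋂ i, coneSide (S i) (ε i)) := by
        refine Subset.antisymm ?_ (union_subset hNW inter_subset_right)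
        intro p hp
        by_cases hp2 : 0 < p.2
        · exact Or.inr ⟨hp2, hp⟩
        · left
          obtain ⟨i⟩ := ‹Nonempty ι›
          have h3 := mem_iInter.1 hp i
          rw [h1 i, mem_cone1] at h3
          show R * p.2 < ‖p.1‖
          rcases (not_lt.1 hp2).eq_or_lt with h4 | h4
          · rw [h4, mul_zero, norm_pos_iff]
            exact fun h5 => h3.1 (Prod.ext h5 h4)
          · have := norm_nonneg p.1
            nlinarith
      rw [heq]
      obtain ⟨y, hy⟩ := NormedSpace.exists_lt_norm ℝ E R
      have hy' : ((y, 1) : E × ℝ) ∈ {p : E × ℝ | R * p.2 < ‖p.1‖} := by simpa using hy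
      exact IsPreconnected.union (y, 1) hy' ⟨by simp, hNW hy'⟩ hN (hP ε)
  have := beta_one (fun ε : ι → Fin 2 => ⋂ i, coneSide (S i) (ε i))
    (fun ε => isOpen_iInter_of_finite fun i => cone_open (hS i) _) hconn ?_ ?_
  · rw [hU, this]
    simp
  · intro ε
    obtain ⟨x, hx⟩ := (h ε).1
    refine ⟨(x, 1), mem_iInter.2 fun i => (mem_cone_pos (by simp)).2 ?_⟩
    simpa using mem_iInter.1 hx i
  · intro ε ε' hne
    obtain ⟨i, hi⟩ := Function.ne_iff.1 hne
    rw [Set.disjoint_left]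
    intro p h1 h2
    have h1 := mem_iInter.1 h1 i
    have h2 := mem_iInter.1 h2 i
    have key : p ∈ coneSide (S i) 0 → p ∈ coneSide (S i) 1 → False := by
      intro h3 h4
      exact side_disj (mem_cone0.1 h3).2 ((mem_cone1.1 h4).2 (mem_cone0.1 h3).1)
    generalize ε i = e at *
    generalize ε' i = e' at *
    fin_cases e <;> fin_cases e'
    · exact hi rfl
    · exact key h1 h2
    · exact key h2 h1
    · exact hi rfl

end Sides
end VennAux

namespace VennAux
section Main

lemma step_beta {m n : ℕ} (hm : 2 ≤ m) {S : Fin n → Set (EuclideanSpace ℝ (Fin m))}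
    (hV : IsSimpleVennDiagram m S) (hFR : FullyReducible m S) (t : Finset (Fin n))
    (ht2 : 2 ≤ t.card) (htm : t.card ≤ m)
    (ih : ∀ s ⊆ t, s.Nonempty → s ≠ t → HomeoToSphere (m - s.card) (⋂ i ∈ s, S i)) :
    beta t.card (Uc (⋂ i ∈ t, S i)) = 1 := by
  have hc : ∀ i, IsCompact (S i) := fun i => (hV.1.1 i).1
  have htne : t.Nonempty := Finset.card_pos.1 (by omega)
  have : Nonempty (Fin m) := ⟨⟨0, by omega⟩⟩
  have hsne : Nonempty {x // x ∈ t} := htne.to_subtype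
  have hlt : ∀ s ⊆ t, s ≠ t → s.card < t.card := fun s hs hne =>
    Finset.card_lt_card (hs.ssubset_of_ne hne)
  have h1 := beta_venn (fun i : {x // x ∈ t} => S i.1) (fun i => hc i.1) (hFR t).2.1
  rw [Fintype.card_coe, show (⋃ i : {x // x ∈ t}, S i.1) = ⋃ i ∈ t, S i from by ext x; simp] at h1
  rw [addl t htne S hc 1] at h1
  · have h2 : (∑ s ∈ t.powerset, if s = ∅ then (0 : Cardinal)
        else beta (1 + (s.card - 1)) (Uc (⋂ i ∈ s, S i))) + 1 =
        ∑ s ∈ t.powerset, if s = ∅ then (1 : Cardinal)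
        else beta (1 + (s.card - 1)) (Uc (⋂ i ∈ s, S i)) := by
      have : (1 : Cardinal) = ∑ s ∈ t.powerset, if s = ∅ then (1 : Cardinal) else 0 := by
        rw [Finset.sum_ite_eq', if_pos (Finset.empty_mem_powerset _)]
      refine (congrArg (_ + ·) this).trans ?_
      rw [← Finset.sum_add_distrib]
      refine Finset.sum_congr rfl fun s _ => ?_
      by_cases h0 : s = ∅ <;> simp [h0]
    rw [h2, ← Finset.sum_erase_add _ _ (Finset.mem_powerset_self t)] at h1
    rw [Finset.sum_congr rfl (g := fun _ => (1 : Cardinal))] at h1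
    · rw [if_neg htne.ne_empty, Finset.sum_const, Finset.card_erase_of_mem
        (Finset.mem_powerset_self t), Finset.card_powerset,
        show 1 + (t.card - 1) = t.card by omega, nsmul_eq_mul, mul_one] at h1
      have h3 : (2 : Cardinal) ^ t.card = ((2 ^ t.card - 1 : ℕ) : Cardinal) + 1 := by
        have : 2 ^ t.card = (2 ^ t.card - 1) + 1 := (Nat.sub_add_cancel Nat.one_le_two_pow).symm
        exact_mod_cast congrArg (Nat.cast : ℕ → Cardinal.{0}) this
      rw [h3] at h1
      exact Cardinal.eq_of_add_eq_add_left h1 (Cardinal.natCast_lt_aleph0)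
    · intro s hs
      rw [Finset.mem_erase, Finset.mem_powerset] at hs
      by_cases h0 : s = ∅
      · rw [if_pos h0]
      · rw [if_neg h0]
        have hsn := Finset.nonempty_iff_ne_empty.2 h0
        have := hlt s hs.2 hs.1
        have := Finset.card_pos.2 hsn
        exact beta_homeo_one (ih s hs.2 hsn hs.1) (by omega)
  · intro s hs hsn hst
    have := hlt s hs hst
    exact acyc_homeo_top (ih s hs hsn hst) (by omega)
  · intro s hs hs2 r hr
    by_cases hst : s = t
    · subst hst
      have h4 := hV.2 s hs2
      split_ifs at h4 with h5
      · rw [h4]; exact acyc_empty_low (by omega)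
      · obtain ⟨𝒞, h6, h7⟩ := h4
        rw [h6]
        exact (union_facts 𝒞 h7).2.1 r (by omega)
    · have := hlt s hs hst
      exact acyc_homeo (ih s hs (Finset.card_pos.1 (by omega)) hst) (by omega)

lemma sphere_all {m n : ℕ} (hm : 2 ≤ m) {S : Fin n → Set (EuclideanSpace ℝ (Fin m))}
    (hV : IsSimpleVennDiagram m S) (hFR : FullyReducible m S) (k : ℕ) :
    ∀ t : Finset (Fin n), t.Nonempty → t.card = k → k < m →
      HomeoToSphere (m - t.card) (⋂ i ∈ t, S i) := by
  induction k using Nat.strong_induction_on with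
  | _ k ih =>
    intro t htn htk hkm
    have := Finset.card_pos.2 htn
    by_cases h1 : t.card = 1
    · obtain ⟨i, rfl⟩ := Finset.card_eq_one.1 h1
      simpa using (hV.1.1 i).2
    have hb := step_beta hm hV hFR t (by omega) (by omega) (fun s hs hsn hst => by
      have := Finset.card_lt_card (hs.ssubset_of_ne hst)
      exact ih s.card (by omega) s hsn rfl (by omega))
    have h4 := hV.2 t (by omega)
    rw [if_neg (by omega)] at h4
    obtain ⟨𝒞, h6, h7⟩ := h4
    have h8 := (union_facts 𝒞 h7).2.2 t.card (by omega)
    rw [← h6] at h8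
    rcases h8 with h8 | h8 | h8
    · rw [h8, beta_eq_zero.2 (acyc_empty_low (by omega))] at hb
      exact absurd hb zero_ne_one
    · exact h8
    · rw [hb] at h8
      exact absurd h8 (by norm_num)

end Main
end VennAux

/-- **Theorem 4.** If `V = {S₁, …, Sₙ}` is a fully reducible simple `m`-dimensional
`n`-Venn diagram, then `n ≤ m + 1`. -/
theorem fullyReducible_card_le (m n : ℕ) (hm : 2 ≤ m)
    (S : Fin n → Set (EuclideanSpace ℝ (Fin m)))
    (hV : IsSimpleVennDiagram m S) (hFR : FullyReducible m S) :
    n ≤ m + 1 := by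
  by_contra hn
  obtain ⟨t, -, ht⟩ := Finset.exists_subset_card_eq (s := (Finset.univ : Finset (Fin n))) (n := m)
    (by simp; omega)
  have hb := VennAux.step_beta hm hV hFR t (by omega) (by omega) (fun s hs hsn hst => by
    have := Finset.card_lt_card (hs.ssubset_of_ne hst)
    exact VennAux.sphere_all hm hV hFR s.card s hsn rfl (by omega))
  have h4 := hV.2 t (by omega)
  rw [if_pos (by omega)] at h4
  rw [h4, VennAux.beta_eq_zero.2 (VennAux.acyc_empty_low (by omega))] at hb
  exact absurd hb zero_ne_one
end

section
/- For every integer m ≥ 3, the following determinant identity holds: the determinant of the (m-1)×(m-1) matrix whose rows are indexed by j = 2, 3, ..., m and whose row j is (1, j, j^2, ..., j^{m-3}, j·2^{j-1}) equals 2(m-1) times the determinant of the (m-1)×(m-1) matrix whose row j is (1, j, j^2, ..., j^{m-3}, 2^{j-1}). -/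
open Matrix

lemma aux_pow (n c : ℕ) (h : c < n) :
    ∑ r ∈ Finset.range (n + 1), ((-1 : ℝ) ^ (n - r) * (n.choose r : ℝ)) * ((r : ℝ) + 2) ^ c = 0 := by
  have h1 := fwdDiff_iter_eq_sum_shift (1 : ℝ) (fun x : ℝ => x ^ c) n 2
  rw [fwdDiff_iter_pow_eq_zero_of_lt h] at h1
  simp only [Pi.zero_apply] at h1
  rw [h1]
  apply Finset.sum_congr rfl
  intro r _
  simp [zsmul_eq_mul, add_comm]

lemma aux_two (n : ℕ) :
    ∑ r ∈ Finset.range (n + 1), ((-1 : ℝ) ^ (n - r) * (n.choose r : ℝ)) * 2 ^ r = 1 := by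
  have h := add_pow (2 : ℝ) (-1) n
  norm_num at h
  refine Eq.trans ?_ h.symm
  apply Finset.sum_congr rfl
  intro r _
  ring

lemma aux_two' (k : ℕ) :
    ∑ r ∈ Finset.range (k + 2), ((-1 : ℝ) ^ (k + 1 - r) * ((k + 1).choose r : ℝ)) * (r * 2 ^ r)
      = 2 * (k + 1) := by
  rw [Finset.sum_range_succ']
  have h := aux_two k
  have h2 := congrArg (fun x : ℝ => 2 * ((k : ℝ) + 1) * x) h
  simp only [mul_one] at h2
  refine Eq.trans ?_ h2
  rw [Finset.mul_sum]
  simp only [Nat.cast_zero, zero_mul, mul_zero, add_zero]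
  apply Finset.sum_congr rfl
  intro r _
  have h3 : ((k : ℝ) + 1) * (k.choose r) = ((k + 1).choose (r + 1)) * (r + 1) := by
    exact_mod_cast Nat.add_one_mul_choose_eq k r
  rw [Nat.add_sub_add_right]
  push_cast
  linear_combination (-(-1 : ℝ) ^ (k - r) * 2 * 2 ^ r) * h3

lemma aux_sum (k : ℕ) :
    ∑ r ∈ Finset.range (k + 2), ((-1 : ℝ) ^ (k + 1 - r) * ((k + 1).choose r : ℝ)) *
      (((r : ℝ) + 2) * 2 ^ (r + 1) - 2 * ((k : ℝ) + 2) * 2 ^ (r + 1)) = 0 := by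
  have h1 := aux_two' k
  have h2 := aux_two (k + 1)
  have h3 : 2 * (∑ r ∈ Finset.range (k + 2),
        ((-1 : ℝ) ^ (k + 1 - r) * ((k + 1).choose r : ℝ)) * (r * 2 ^ r)) -
      4 * (k + 1) * (∑ r ∈ Finset.range (k + 2),
        ((-1 : ℝ) ^ (k + 1 - r) * ((k + 1).choose r : ℝ)) * 2 ^ r) = 0 := by
    rw [h1, h2]
    ring
  refine Eq.trans ?_ h3
  rw [Finset.mul_sum, Finset.mul_sum, ← Finset.sum_sub_distrib]
  apply Finset.sum_congr rfl
  intro r _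
  ring

/-- **Determinant identity.** For `m ≥ 3`, the determinant of the `(m-1) × (m-1)` matrix
whose row indexed by `j = 2, …, m` is `(1, j, j², …, j^{m-3}, j·2^{j-1})` equals `2(m-1)`
times the determinant of the matrix whose row `j` is `(1, j, j², …, j^{m-3}, 2^{j-1})`.
Here the row of index `r : Fin (m-1)` corresponds to `j = r + 2`, and the column of index
`c : Fin (m-1)` with `c < m - 2` carries the entry `j^c`, while the last column `c = m - 2`
carries the entries `j·2^{j-1}` resp. `2^{j-1}`. -/
theorem det_identity (m : ℕ) (hm : 3 ≤ m) :
    (Matrix.of fun r c : Fin (m - 1) =>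
        if (c : ℕ) = m - 2 then (((r : ℕ) + 2 : ℝ)) * 2 ^ ((r : ℕ) + 1)
        else (((r : ℕ) + 2 : ℝ)) ^ (c : ℕ)).det
      = 2 * ((m : ℝ) - 1) *
        (Matrix.of fun r c : Fin (m - 1) =>
          if (c : ℕ) = m - 2 then (2 : ℝ) ^ ((r : ℕ) + 1)
          else (((r : ℕ) + 2 : ℝ)) ^ (c : ℕ)).det := by
  obtain ⟨k, rfl⟩ : ∃ k, m = k + 3 := ⟨m - 3, by omega⟩
  change (Matrix.of fun r c : Fin (k + 2) =>
        if (c : ℕ) = k + 1 then (((r : ℕ) + 2 : ℝ)) * 2 ^ ((r : ℕ) + 1)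
        else (((r : ℕ) + 2 : ℝ)) ^ (c : ℕ)).det
      = 2 * (((k + 3 : ℕ) : ℝ) - 1) *
        (Matrix.of fun r c : Fin (k + 2) =>
          if (c : ℕ) = k + 1 then (2 : ℝ) ^ ((r : ℕ) + 1)
          else (((r : ℕ) + 2 : ℝ)) ^ (c : ℕ)).det
  have key : ∀ f : Fin (k + 2) → ℝ, (Matrix.of fun r c : Fin (k + 2) =>
      if (c : ℕ) = k + 1 then f r else (((r : ℕ) + 2 : ℝ)) ^ (c : ℕ)) =
      (Matrix.of fun r c : Fin (k + 2) => (((r : ℕ) + 2 : ℝ)) ^ (c : ℕ)).updateCol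
        (Fin.last (k + 1)) f := by
    intro f
    ext r c
    simp [Matrix.updateCol_apply, Fin.ext_iff]
  have hz : (Matrix.of fun r c : Fin (k + 2) =>
      if (c : ℕ) = k + 1 then (((r : ℕ) : ℝ) + 2) * 2 ^ ((r : ℕ) + 1)
        - 2 * ((k : ℝ) + 2) * 2 ^ ((r : ℕ) + 1)
      else (((r : ℕ) + 2 : ℝ)) ^ (c : ℕ)).det = 0 := by
    rw [← Matrix.exists_vecMul_eq_zero_iff]
    refine ⟨fun r => (-1 : ℝ) ^ (k + 1 - (r : ℕ)) * ((k + 1).choose (r : ℕ) : ℝ), ?_, ?_⟩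
    · intro h
      have := congrFun h (Fin.last (k + 1))
      simp at this
    · ext c
      simp only [Matrix.vecMul, dotProduct, Matrix.of_apply, Pi.zero_apply]
      by_cases hc : (c : ℕ) = k + 1
      · simp only [hc, if_true]
        rw [← aux_sum k, Finset.sum_range]
      · simp only [hc, if_false]
        rw [← aux_pow (k + 1) c (by omega), Finset.sum_range]
  have hA := key (fun r => (((r : ℕ) : ℝ) + 2) * 2 ^ ((r : ℕ) + 1))
  have hB := key (fun r => 2 ^ ((r : ℕ) + 1))
  have hC := key (fun r => (((r : ℕ) : ℝ) + 2) * 2 ^ ((r : ℕ) + 1)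
        - 2 * ((k : ℝ) + 2) * 2 ^ ((r : ℕ) + 1))
  rw [hC] at hz
  rw [hA, hB, ← Matrix.det_updateCol_smul]
  have hsplit : (fun r : Fin (k + 2) => (((r : ℕ) : ℝ) + 2) * 2 ^ ((r : ℕ) + 1)) =
      (fun r : Fin (k + 2) => (((r : ℕ) : ℝ) + 2) * 2 ^ ((r : ℕ) + 1)
        - 2 * ((k : ℝ) + 2) * 2 ^ ((r : ℕ) + 1)) +
      (2 * (((k + 3 : ℕ) : ℝ) - 1)) • (fun r : Fin (k + 2) => (2 : ℝ) ^ ((r : ℕ) + 1)) := by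
    ext r
    simp only [Pi.add_apply, Pi.smul_apply, smul_eq_mul]
    push_cast
    ring
  rw [hsplit, Matrix.det_updateCol_add, hz, zero_add]
end
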